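/- There is no algorithm which takes as input two tuples (h_1,…,h_15) and (h'_1,…,h'_15) of elements of GL(4,ℤ) and decides whether the two semidirect products ℤ⁴ ⋊ F₁₅, in which the i-th free generator of F₁₅ acts on ℤ⁴ by the matrix h_i (respectively h'_i), are isomorphic as groups. Formally: the predicate on pairs (f, g) of functions Fin 15 → GL(4,ℤ) asserting that ℤ⁴ ⋊_{φ_f} FreeGroup (Fin 15) is isomorphic to ℤ⁴ ⋊_{φ_g} FreeGroup (Fin 15) — where φ_f : FreeGroup (Fin 15) → Aut(ℤ⁴) is the homomorphism sending the i-th generator to the automorphism of ℤ⁴ given by f(i) — is not a computable predicate. -/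

import Mathlib

namespace GLPrimcodable

theorem encode_int_ofNat (n : ℕ) : Encodable.encode (Int.ofNat n) = 2 * n := rfl
theorem encode_int_natCast (n : ℕ) : Encodable.encode ((n : ℤ)) = 2 * n := rfl
theorem encode_int_negSucc (n : ℕ) : Encodable.encode (Int.negSucc n) = 2 * n + 1 := rfl

theorem primrec_toNat : Primrec Int.toNat := by
  have hg : Primrec (fun c : ℕ => if c % 2 = 0 then c / 2 else 0) :=
    Primrec.ite
      (PrimrecRel.comp Primrec.eq (Primrec.nat_mod.comp .id (.const 2)) (.const 0))
      (Primrec.nat_div.comp .id (.const 2)) (.const 0)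
  have h := hg.comp (Primrec.encode (α := ℤ))
  refine h.of_eq ?_
  rintro (n | n)
  · rw [encode_int_ofNat]
    simp only [Int.ofNat_eq_natCast]
    split_ifs with h1 <;> omega
  · rw [encode_int_negSucc, Int.negSucc_eq]
    split_ifs with h1 <;> omega

theorem primrec_negToNat : Primrec (fun z : ℤ => (-z).toNat) := by
  have hg : Primrec (fun c : ℕ => if c % 2 = 1 then c / 2 + 1 else 0) :=
    Primrec.ite
      (PrimrecRel.comp Primrec.eq (Primrec.nat_mod.comp .id (.const 2)) (.const 1))
      (Primrec.succ.comp (Primrec.nat_div.comp .id (.const 2))) (.const 0)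
  have h := hg.comp (Primrec.encode (α := ℤ))
  refine h.of_eq ?_
  rintro (n | n)
  · rw [encode_int_ofNat]
    simp only [Int.ofNat_eq_natCast]
    split_ifs with h1 <;> omega
  · rw [encode_int_negSucc, Int.negSucc_eq]
    split_ifs with h1 <;> omega

theorem primrec_intSubNat : Primrec₂ (fun a b : ℕ => (a : ℤ) - b) := by
  have hg : Primrec (fun p : ℕ × ℕ =>
      Denumerable.ofNat ℤ (if p.2 ≤ p.1 then 2 * (p.1 - p.2) else 2 * (p.2 - p.1) - 1)) :=
    (Primrec.ofNat ℤ).comp <|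
      Primrec.ite (PrimrecRel.comp Primrec.nat_le Primrec.snd Primrec.fst)
        ((Primrec.nat_mul.comp (.const 2) (Primrec.nat_sub.comp .fst .snd)))
        (Primrec.nat_sub.comp (Primrec.nat_mul.comp (.const 2)
          (Primrec.nat_sub.comp .snd .fst)) (.const 1))
  refine Primrec₂.mk (hg.of_eq ?_)
  rintro ⟨a, b⟩
  by_cases h : b ≤ a
  · have h1 : ((a : ℤ) - b) = ((a - b : ℕ) : ℤ) := by omega
    rw [if_pos h, h1, show (2 * (a - b) = Encodable.encode (((a - b : ℕ) : ℤ))) from rfl,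
      Denumerable.ofNat_encode]
  · have h1 : ((a : ℤ) - b) = Int.negSucc (b - a - 1) := by
      rw [Int.negSucc_eq]; omega
    have h2 : 2 * (b - a) - 1 = Encodable.encode (Int.negSucc (b - a - 1)) := by
      rw [encode_int_negSucc]; omega
    rw [if_neg h, h1, h2, Denumerable.ofNat_encode]

theorem toNat_sub_neg_toNat (z : ℤ) : (z.toNat : ℤ) - (-z).toNat = z := by omega

theorem primrec_int_add : Primrec₂ ((· + ·) : ℤ → ℤ → ℤ) := by
  have h : Primrec (fun p : ℤ × ℤ =>
      ((p.1.toNat + p.2.toNat : ℕ) : ℤ) - ((-p.1).toNat + (-p.2).toNat : ℕ)) :=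
    primrec_intSubNat.comp
      (Primrec.nat_add.comp (primrec_toNat.comp .fst) (primrec_toNat.comp .snd))
      (Primrec.nat_add.comp (primrec_negToNat.comp .fst) (primrec_negToNat.comp .snd))
  refine Primrec₂.mk (h.of_eq ?_)
  rintro ⟨a, b⟩
  push_cast
  omega

theorem primrec_int_mul : Primrec₂ ((· * ·) : ℤ → ℤ → ℤ) := by
  have h : Primrec (fun p : ℤ × ℤ =>
      ((p.1.toNat * p.2.toNat + (-p.1).toNat * (-p.2).toNat : ℕ) : ℤ) -
        (p.1.toNat * (-p.2).toNat + (-p.1).toNat * p.2.toNat : ℕ)) :=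
    primrec_intSubNat.comp
      (Primrec.nat_add.comp
        (Primrec.nat_mul.comp (primrec_toNat.comp .fst) (primrec_toNat.comp .snd))
        (Primrec.nat_mul.comp (primrec_negToNat.comp .fst) (primrec_negToNat.comp .snd)))
      (Primrec.nat_add.comp
        (Primrec.nat_mul.comp (primrec_toNat.comp .fst) (primrec_negToNat.comp .snd))
        (Primrec.nat_mul.comp (primrec_negToNat.comp .fst) (primrec_toNat.comp .snd)))
  refine Primrec₂.mk (h.of_eq ?_)
  rintro ⟨a, b⟩
  have ha := toNat_sub_neg_toNat a
  have hb := toNat_sub_neg_toNat b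
  push_cast
  nlinarith [ha, hb]

end GLPrimcodable
section Infra2
open GLPrimcodable

namespace GLPrimcodable

abbrev F44 : Type := Fin 4 → Fin 4 → ℤ

instance matPrimcodable : Primcodable (Matrix (Fin 4) (Fin 4) ℤ) :=
  Primcodable.ofEquiv F44 Matrix.of.symm

/-- Matrix multiplication written out entrywise on `Fin 4 → Fin 4 → ℤ`. -/
def mulF (p : F44 × F44) : F44 := fun i j =>
  p.1 i 0 * p.2 0 j + (p.1 i 1 * p.2 1 j + (p.1 i 2 * p.2 2 j + p.1 i 3 * p.2 3 j))

theorem primrec_mulF : Primrec mulF := by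
  rw [Primrec.fin_curry]
  refine Primrec₂.mk ?_
  rw [Primrec.fin_curry]
  refine Primrec₂.mk ?_
  -- p : ((F44 × F44) × Fin 4) × Fin 4
  have hA : Primrec (fun p : ((F44 × F44) × Fin 4) × Fin 4 => p.1.1.1) :=
    Primrec.fst.comp (Primrec.fst.comp Primrec.fst)
  have hB : Primrec (fun p : ((F44 × F44) × Fin 4) × Fin 4 => p.1.1.2) :=
    Primrec.snd.comp (Primrec.fst.comp Primrec.fst)
  have hi : Primrec (fun p : ((F44 × F44) × Fin 4) × Fin 4 => p.1.2) :=
    Primrec.snd.comp Primrec.fst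
  have hj : Primrec (fun p : ((F44 × F44) × Fin 4) × Fin 4 => p.2) := Primrec.snd
  have hAik : ∀ k : Fin 4, Primrec (fun p : ((F44 × F44) × Fin 4) × Fin 4 => p.1.1.1 p.1.2 k) :=
    fun k => Primrec.fin_app.comp (Primrec.fin_app.comp hA hi) (Primrec.const k)
  have hBkj : ∀ k : Fin 4, Primrec (fun p : ((F44 × F44) × Fin 4) × Fin 4 => p.1.1.2 k p.2) :=
    fun k => Primrec.fin_app.comp (Primrec.fin_app.comp hB (Primrec.const k)) hj
  exact primrec_int_add.comp (primrec_int_mul.comp (hAik 0) (hBkj 0))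
    (primrec_int_add.comp (primrec_int_mul.comp (hAik 1) (hBkj 1))
      (primrec_int_add.comp (primrec_int_mul.comp (hAik 2) (hBkj 2))
        (primrec_int_mul.comp (hAik 3) (hBkj 3))))

theorem primrec_matMul :
    Primrec (fun p : Matrix (Fin 4) (Fin 4) ℤ × Matrix (Fin 4) (Fin 4) ℤ => p.1 * p.2) := by
  rw [← Primrec.of_equiv_iff (Matrix.of.symm : Matrix (Fin 4) (Fin 4) ℤ ≃ F44)]
  have h : Primrec (fun p : Matrix (Fin 4) (Fin 4) ℤ × Matrix (Fin 4) (Fin 4) ℤ =>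
      mulF (Matrix.of.symm p.1, Matrix.of.symm p.2)) :=
    primrec_mulF.comp (Primrec.pair (Primrec.of_equiv.comp Primrec.fst)
      (Primrec.of_equiv.comp Primrec.snd))
  refine h.of_eq ?_
  rintro ⟨A, B⟩
  funext i j
  show mulF (A, B) i j = (A * B) i j
  rw [Matrix.mul_apply, Fin.sum_univ_four, mulF]
  ring

theorem primrecPred_isUnitPair :
    PrimrecPred (fun p : Matrix (Fin 4) (Fin 4) ℤ × Matrix (Fin 4) (Fin 4) ℤ =>
      p.1 * p.2 = 1 ∧ p.2 * p.1 = 1) := by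
  have h1 : PrimrecPred (fun p : Matrix (Fin 4) (Fin 4) ℤ × Matrix (Fin 4) (Fin 4) ℤ =>
      p.1 * p.2 = 1) :=
    PrimrecRel.comp Primrec.eq primrec_matMul (Primrec.const 1)
  have h2 : PrimrecPred (fun p : Matrix (Fin 4) (Fin 4) ℤ × Matrix (Fin 4) (Fin 4) ℤ =>
      p.2 * p.1 = 1) :=
    PrimrecRel.comp Primrec.eq
      (primrec_matMul.comp (Primrec.pair Primrec.snd Primrec.fst)) (Primrec.const 1)
  exact h1.and h2

instance glPrimcodable : Primcodable (Matrix.GeneralLinearGroup (Fin 4) ℤ) :=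
  letI : Primcodable {p : Matrix (Fin 4) (Fin 4) ℤ × Matrix (Fin 4) (Fin 4) ℤ //
      p.1 * p.2 = 1 ∧ p.2 * p.1 = 1} := Primcodable.subtype primrecPred_isUnitPair
  Primcodable.ofEquiv _ (unitsEquivProdSubtype (Matrix (Fin 4) (Fin 4) ℤ))

end GLPrimcodable
end Infra2

namespace GLPrimcodable

/-- The group automorphism of `ℤ⁴` (written multiplicatively) determined by an element of
`GL(4,ℤ)` acting `ℤ`-linearly on `ℤ⁴ = Fin 4 → ℤ`. -/
def glAut (g : Matrix.GeneralLinearGroup (Fin 4) ℤ) :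
    MulAut (Multiplicative (Fin 4 → ℤ)) :=
  AddEquiv.toMultiplicative
    ((LinearMap.GeneralLinearGroup.generalLinearEquiv ℤ (Fin 4 → ℤ)
      (Matrix.GeneralLinearGroup.toLin g)).toAddEquiv)

/-- The action of `FreeGroup (Fin 15)` on `ℤ⁴` sending the `i`-th generator to the
automorphism of `ℤ⁴` given by the matrix `f i`. -/
def phiOf (f : Fin 15 → Matrix.GeneralLinearGroup (Fin 4) ℤ) :
    FreeGroup (Fin 15) →* MulAut (Multiplicative (Fin 4 → ℤ)) :=
  FreeGroup.lift (fun i => glAut (f i))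

end GLPrimcodable

/-!
Let `N` be the normal closure of `r₁, …, r₁₂` in the free group `F₂`. Following Mihailova, the
fibre product of `F₂` with itself over `F₂ / N` is generated by the two diagonal generators and the
elements `(1, rⱼ)`. By Sanov's theorem `F₂ × F₂` embeds into `SL(2, ℤ) × SL(2, ℤ) ≤ GL(4, ℤ)`; take
the fourteen matrices so obtained together with the matrix of a fifteenth element `(1, w)`. If
`w ∈ N` then a change of basis of the free group replaces the last matrix by the identity.
Conversely `ℤ⁴` is preserved by any isomorphism of the semidirect products, so the tuples for `w`
and for `1` generate conjugate subgroups of `GL(4, ℤ)`; a power of the conjugating matrix lies in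
the product of the two blocks, and this forces `w ∈ N`. Thus it suffices to find twelve relators on
two generators with undecidable word problem, even for a family of words computable from an integer.

For this, a universal machine operating on two integers viewed as stacks of bits is encoded in a
group: the configuration with stacks `a` and `g` becomes the conjugate of a letter `τ` by
`x ^ a * y ^ g`, and the program occurs in a single relator only. A normal form argument in an HNN
extension of a wreath product shows that the relators identify no more configurations than the
machine does.
-/

namespace IsoProblem

/-! ### A machine with two stacks of bits -/

/-- The phases of the stack machine: `exec` obeys the bits of the code stack, `skip` and `scan`
drop a prefix of the code containing as many ones as there are ones on top of the data stack. -/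
inductive Phase
  | exec | skip | scan

/-- A configuration of the stack machine. The integers `data` and `code` are stacks of bits with
the least significant bit on top, so that `-1` is an infinite stack of ones. -/
structure Config where
  phase : Phase
  data : ℤ
  code : ℤ

/-- Pushing a word on a stack of bits. -/
def push (w : List Bool) (g : ℤ) : ℤ := w.foldr Int.bit g

@[simp] theorem push_nil (g : ℤ) : push [] g = g := rfl

theorem push_cons (b : Bool) (w : List Bool) (g : ℤ) : push (b :: w) g = Int.bit b (push w g) :=
  rfl

theorem push_append (u v : List Bool) (g : ℤ) : push (u ++ v) g = push u (push v g) :=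
  List.foldr_append

/-- One step of the stack machine with program `Z`. In phase `exec`, the code `00` pushes a one on
the data, `01` pushes a zero, and `1` calls the program, by pushing it on the code. -/
def step (Z : List Bool) : Config → Config
  | ⟨.exec, a, g⟩ =>
    if g % 4 = 0 then ⟨.exec, 2 * a + 1, g / 4⟩
    else if g % 4 = 2 then ⟨.exec, 2 * a, g / 4⟩
    else ⟨.skip, a, push Z (g / 2)⟩
  | ⟨.skip, a, g⟩ => if a % 2 = 0 then ⟨.exec, a / 2, g⟩ else ⟨.scan, a / 2, g⟩
  | ⟨.scan, a, g⟩ => if g % 2 = 0 then ⟨.scan, a, g / 2⟩ else ⟨.skip, a, g / 2⟩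

/-- Reachability in any number of steps of the stack machine. -/
abbrev Reaches (Z : List Bool) : Config → Config → Prop :=
  Relation.ReflTransGen fun c d => step Z c = d

/-- Reachability in a positive number of steps of the stack machine. -/
abbrev ReachesPos (Z : List Bool) : Config → Config → Prop :=
  Relation.TransGen fun c d => step Z c = d

/-- The configuration playing the role of the halting state: both stacks contain only ones, and
the machine alternates between `skip` and `scan` forever. -/
def target : Config := ⟨.skip, -1, -1⟩

/-- The halting predicate of the stack machine. -/
def Good (Z : List Bool) (c : Config) : Prop := Reaches Z c target

section Reachability

variable {Z : List Bool} {c d : Config}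

theorem reaches_of_step (h : step Z c = d) : Reaches Z c d := .single h

theorem good_step : Good Z (step Z c) ↔ Good Z c := by
  refine ⟨.head rfl, fun h => ?_⟩
  rcases h.cases_head with rfl | ⟨_, rfl, h⟩
  · exact .single (by simp [step, target])
  · exact h

theorem Reaches.good_iff (h : Reaches Z c d) : Good Z c ↔ Good Z d := by
  induction h with
  | refl => rfl
  | tail _ hstep ih => rw [ih, ← hstep, good_step]

theorem Reaches.data_of_target (h : Reaches Z target c) : c.data = -1 := by
  suffices c.data = -1 ∧ c.code = -1 ∧ (c.phase = .skip ∨ c.phase = .scan) from this.1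
  induction h with
  | refl => simp [target]
  | tail _ hstep ih =>
    subst hstep
    rename_i c _
    obtain ⟨phase, a, g⟩ := c
    obtain ⟨rfl, rfl, rfl | rfl⟩ := ih <;> simp [step]

theorem not_good_of_progress {P : Config → Prop} (hdata : ∀ c, P c → c.data ≠ -1)
    (hprogress : ∀ c, P c → ∃ d, P d ∧ ReachesPos Z c d) (hc : P c) : ¬ Good Z c := by
  -- The set of configurations from which `P` can be reached is stable under `step`.
  intro hgood
  have hreach : ∀ {e}, Reaches Z c e → ∃ d, P d ∧ Reaches Z e d := by
    intro e he
    induction he with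
    | refl => exact ⟨c, hc, .refl⟩
    | tail _ hstep ih =>
      obtain ⟨d, hd, hreach⟩ := ih
      subst hstep
      rcases hreach.cases_head with rfl | ⟨_, rfl, hreach⟩
      · obtain ⟨e, he, hpos⟩ := hprogress _ hd
        obtain ⟨_, rfl, hreach⟩ := Relation.TransGen.head'_iff.1 hpos
        exact ⟨e, he, hreach⟩
      · exact ⟨d, hd, hreach⟩
  obtain ⟨d, hd, htarget⟩ := hreach hgood
  exact hdata d hd htarget.data_of_target

end Reachability

/-! ### Programs for the stack machine -/

/-- Pushing `n` ones on a stack of bits. -/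
def pushOnes (n : ℕ) (a : ℤ) : ℤ := 2 ^ n * (a + 1) - 1

/-- Pushing the token of `n`, which consists of `n` ones followed by a zero. -/
def token (n : ℕ) (a : ℤ) : ℤ := pushOnes n (2 * a)

@[simp] theorem pushOnes_zero (a : ℤ) : pushOnes 0 a = a := by simp [pushOnes]

theorem pushOnes_succ (n : ℕ) (a : ℤ) : pushOnes (n + 1) a = 2 * pushOnes n a + 1 := by
  simp only [pushOnes, pow_succ]; ring

theorem pushOnes_pushOnes (n m : ℕ) (a : ℤ) :
    pushOnes n (pushOnes m a) = pushOnes (n + m) a := by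
  simp only [pushOnes, pow_add]; ring

theorem pushOnes_token (n m : ℕ) (a : ℤ) : pushOnes n (token m a) = token (n + m) a :=
  pushOnes_pushOnes _ _ _

@[simp] theorem pushOnes_neg_one (n : ℕ) : pushOnes n (-1) = -1 := by simp [pushOnes]

theorem token_ne_neg_one (n : ℕ) (a : ℤ) : token n a ≠ -1 := by
  have : (2 : ℤ) ^ n * (2 * a + 1) ≠ 0 := mul_ne_zero (by positivity) (by omega)
  unfold token pushOnes
  omega

/-- The code of a call of the program. -/
abbrev callCode : List Bool := [true]

/-- The code that pushes a zero on the data. -/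
abbrev zeroCode : List Bool := [false, true]

/-- The code that pushes `n` ones on the data. -/
def onesCode (n : ℕ) : List Bool := List.replicate (2 * n) false

/-- The code that pushes the token of `n` on the data. -/
def tokenCode (n : ℕ) : List Bool := zeroCode ++ onesCode n

/-- The code that calls the program, telling it to resume execution after `m` ones of the code. -/
def jumpCode (m : ℕ) : List Bool := tokenCode m ++ callCode

@[simp] theorem count_onesCode (n : ℕ) : (onesCode n).count true = 0 := by
  simp [onesCode, List.count_replicate]

@[simp] theorem count_tokenCode (n : ℕ) : (tokenCode n).count true = 1 := by
  simp [tokenCode]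

@[simp] theorem count_jumpCode (n : ℕ) : (jumpCode n).count true = 2 := by
  simp [jumpCode]

/-- A word that is empty or ends in a one: after as many ones as it contains, the phase `skip` is
exactly at its end. -/
def IsBlock (w : List Bool) : Prop := ∀ b ∈ w.getLast?, b = true

theorem isBlock_nil : IsBlock [] := by simp [IsBlock]

theorem isBlock_concat (u : List Bool) : IsBlock (u ++ [true]) := by simp [IsBlock]

theorem IsBlock.append {u v : List Bool} (hu : IsBlock u) (hv : IsBlock v) :
    IsBlock (u ++ v) := by
  rcases v.eq_nil_or_concat' with rfl | ⟨v, b, rfl⟩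
  · simpa using hu
  · simpa [IsBlock] using hv

section Runs

variable {Z : List Bool}

theorem reaches_zeroCode (a g : ℤ) : Reaches Z ⟨.exec, a, push zeroCode g⟩ ⟨.exec, 2 * a, g⟩ := by
  have hmod : (2 * (2 * g + 1)) % 4 = 2 := by omega
  have hdiv : (2 * (2 * g + 1)) / 4 = g := by omega
  exact .single (by simp [step, push_cons, Int.bit_val, hmod, hdiv])

theorem reachesPos_callCode (a g : ℤ) :
    ReachesPos Z ⟨.exec, a, push callCode g⟩ ⟨.skip, a, push Z g⟩ := by
  have hmod0 : (2 * g + 1) % 4 ≠ 0 := by omega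
  have hmod2 : (2 * g + 1) % 4 ≠ 2 := by omega
  have hdiv : (2 * g + 1) / 2 = g := by omega
  exact .single (by simp [step, push_cons, Int.bit_val, hmod0, hmod2, hdiv])

theorem reaches_onesCode (n : ℕ) (a g : ℤ) :
    Reaches Z ⟨.exec, a, push (onesCode n) g⟩ ⟨.exec, pushOnes n a, g⟩ := by
  induction n generalizing g with
  | zero => simpa [onesCode] using Relation.ReflTransGen.refl
  | succ n ih =>
    have hcode : push (onesCode (n + 1)) g = push (onesCode n) (2 * (2 * g)) := by
      rw [onesCode, Nat.mul_succ, List.replicate_add, push_append]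
      simp [onesCode, push_cons, Int.bit_val]
    have hmod : (2 * (2 * g)) % 4 = 0 := by omega
    have hdiv : (2 * (2 * g)) / 4 = g := by omega
    rw [hcode, pushOnes_succ]
    exact (ih _).tail (by simp [step, hmod, hdiv])

theorem reaches_tokenCode (n : ℕ) (a g : ℤ) :
    Reaches Z ⟨.exec, a, push (tokenCode n) g⟩ ⟨.exec, token n a, g⟩ := by
  rw [tokenCode, push_append]
  exact (reaches_zeroCode _ _).trans (reaches_onesCode _ _ _)

theorem step_skip_pushOnes (n : ℕ) (a g : ℤ) :
    step Z ⟨.skip, pushOnes (n + 1) a, g⟩ = ⟨.scan, pushOnes n a, g⟩ := by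
  have hmod : (2 * pushOnes n a + 1) % 2 = 1 := by omega
  have hdiv : (2 * pushOnes n a + 1) / 2 = pushOnes n a := by omega
  simp [pushOnes_succ, step, hmod, hdiv]

theorem step_scan_true (a g : ℤ) : step Z ⟨.scan, a, Int.bit true g⟩ = ⟨.skip, a, g⟩ := by
  have hmod : (2 * g + 1) % 2 = 1 := by omega
  have hdiv : (2 * g + 1) / 2 = g := by omega
  simp [Int.bit_val, step, hmod, hdiv]

theorem step_scan_false (a g : ℤ) : step Z ⟨.scan, a, Int.bit false g⟩ = ⟨.scan, a, g⟩ := by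
  simp [Int.bit_val, step]

theorem reaches_scan (u : List Bool) (a g : ℤ) :
    Reaches Z ⟨.scan, pushOnes (u.count true) a, push (u ++ [true]) g⟩ ⟨.skip, a, g⟩ := by
  induction u with
  | nil => exact .single (by simp [push_cons, step_scan_true])
  | cons b u ih =>
    cases b with
    | false => simpa [push_cons] using (reaches_of_step (step_scan_false _ _)).trans ih
    | true =>
      rw [List.count_cons_self]
      exact (reaches_of_step (step_scan_true _ _)).trans
        ((reaches_of_step (step_skip_pushOnes _ _ _)).trans ih)

theorem reaches_skip_block {w : List Bool} (hw : IsBlock w) (a g : ℤ) :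
    Reaches Z ⟨.skip, pushOnes (w.count true) a, push w g⟩ ⟨.skip, a, g⟩ := by
  rcases w.eq_nil_or_concat' with rfl | ⟨u, b, rfl⟩
  · simpa using Relation.ReflTransGen.refl
  · obtain rfl : b = true := by simpa [IsBlock] using hw
    rw [List.count_append, List.count_singleton_self]
    exact (reaches_of_step (step_skip_pushOnes _ _ _)).trans (reaches_scan u a g)

theorem step_skip_double (a g : ℤ) : step Z ⟨.skip, 2 * a, g⟩ = ⟨.exec, a, g⟩ := by
  simp [step]

theorem reachesPos_skip_token {w : List Bool} (hw : IsBlock w) (a g : ℤ) :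
    ReachesPos Z ⟨.skip, token (w.count true) a, push w g⟩ ⟨.exec, a, g⟩ :=
  .tail' (reaches_skip_block hw (2 * a) g) (step_skip_double a g)

theorem good_skip_neg_one (w : List Bool) : Good Z ⟨.skip, -1, push w (-1)⟩ := by
  have := reaches_skip_block (Z := Z) (isBlock_concat w) (-1) (-1)
  rwa [pushOnes_neg_one, push_append] at this

theorem reaches_jumpCode {w : List Bool} (hZ : IsBlock Z) (hw : IsBlock w) (a g : ℤ) :
    Reaches Z ⟨.exec, a, push (jumpCode (Z.count true + w.count true) ++ w) g⟩ ⟨.exec, a, g⟩ := by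
  rw [jumpCode, push_append, push_append, ← List.count_append]
  refine (reaches_tokenCode _ _ _).trans ((reachesPos_callCode _ _).to_reflTransGen.trans ?_)
  rw [← push_append]
  exact (reachesPos_skip_token (hZ.append hw) a g).to_reflTransGen

end Runs

/-- The instructions from which programs are assembled. When entry `i` of the program is called by
a token of `4 * i` on the data, it

* `save b h`: leaves a frame with the number `h` on the code and calls again, with `b` ones pushed;
* `load h b`: pushes the tokens of `h` and `b` and returns to the frame on top of the code;
* `goto n`: calls again with the token of `n` pushed;
* `store h n`: calls again with the tokens of `h` and `n` pushed. -/
inductive Instr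
  | save (b h : ℕ)
  | load (h b : ℕ)
  | goto (n : ℕ)
  | store (h n : ℕ)

/-- The part of the code of `Instr.save _ h` that remains on the code as a frame. -/
def resumeCode (N r h : ℕ) : List Bool :=
  onesCode h ++ (jumpCode (4 * N + 1 + (4 * r + 1)) ++ zeroCode)

/-- The code of an instruction in a program of `N` entries, `r` of which come after this one. Each
entry is padded to contain exactly four ones, so that a program of `N` entries contains
`4 * N + 1`. -/
def entry (N r : ℕ) : Instr → List Bool
  | .save b h => onesCode b ++ (callCode ++ resumeCode N r h)
  | .load h b => tokenCode h ++ (tokenCode b ++ jumpCode (4 * N + 1 + (4 * r + 1)))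
  | .goto n => tokenCode n ++ (jumpCode (4 * N + 1 + (4 * r + 1)) ++ zeroCode)
  | .store h n => tokenCode h ++ (tokenCode n ++ jumpCode (4 * N + 1 + 4 * r))

/-- The code of the last instructions of a program of `N` entries. -/
def entries (N : ℕ) : List Instr → List Bool
  | [] => []
  | i :: l => entry N l.length i ++ entries N l

/-- The code of a program. -/
def program (P : List Instr) : List Bool := entries P.length P ++ callCode

theorem count_entry (N r : ℕ) (i : Instr) : (entry N r i).count true = 4 := by
  cases i <;> simp [entry, resumeCode, List.count_append, add_assoc]

theorem isBlock_entry (N r : ℕ) (i : Instr) : IsBlock (entry N r i) := by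
  cases i <;> simp [entry, IsBlock, resumeCode, jumpCode, List.getLast?_append,
    List.getLast?_cons]

theorem count_entries (N : ℕ) (l : List Instr) : (entries N l).count true = 4 * l.length := by
  induction l with
  | nil => rfl
  | cons i l ih => rw [entries, List.count_append, count_entry, ih, List.length_cons]; ring

theorem isBlock_entries (N : ℕ) (l : List Instr) : IsBlock (entries N l) := by
  induction l with
  | nil => exact isBlock_nil
  | cons i l ih => exact (isBlock_entry _ _ _).append ih

theorem count_program (P : List Instr) : (program P).count true = 4 * P.length + 1 := by
  simp [program, count_entries]

theorem isBlock_program (P : List Instr) : IsBlock (program P) := isBlock_concat _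

theorem program_ne_nil (P : List Instr) : program P ≠ [] := by simp [program]

theorem reachesPos_entries {Z : List Bool} (N : ℕ) {l : List Instr} {i : ℕ} {I : Instr}
    (hI : l[i]? = some I) (w : List Bool) (a g : ℤ) :
    ReachesPos Z ⟨.skip, token (4 * i) a, push (entries N l ++ w) g⟩
      ⟨.exec, a, push (entry N (l.drop (i + 1)).length I)
        (push (entries N (l.drop (i + 1)) ++ w) g)⟩ := by
  induction l generalizing i with
  | nil => simp at hI
  | cons J l ih =>
    rw [entries, List.append_assoc, push_append]
    cases i with
    | zero =>
      obtain rfl : J = I := by simpa using hI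
      exact .single (by simp [token, step_skip_double])
    | succ i =>
      have hskip := reaches_skip_block (Z := Z) (isBlock_entry N l.length J) (token (4 * i) a)
        (push (entries N l ++ w) g)
      rw [count_entry, pushOnes_token, show 4 + 4 * i = 4 * (i + 1) by ring] at hskip
      exact .trans_right hskip (ih (by simpa using hI))

section Program

variable {P : List Instr} {i : ℕ}

/-- What a call of the entry `i`, of the form `Instr.save _ h`, leaves on the code. -/
def frame (P : List Instr) (i h : ℕ) : List Bool :=
  resumeCode P.length (P.drop (i + 1)).length h ++
    (entries P.length (P.drop (i + 1)) ++ callCode)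

theorem reachesPos_dispatch {I : Instr} (hI : P[i]? = some I) (a g : ℤ) :
    ReachesPos (program P) ⟨.skip, token (4 * i) a, push (program P) g⟩
      ⟨.exec, a, push (entry P.length (P.drop (i + 1)).length I)
        (push (entries P.length (P.drop (i + 1)) ++ callCode) g)⟩ :=
  reachesPos_entries P.length hI callCode a g

theorem reaches_jump_block {w : List Bool} {r : ℕ} (hw : IsBlock w) (hr : w.count true = r)
    (a g : ℤ) :
    Reaches (program P) ⟨.exec, a, push (jumpCode (4 * P.length + 1 + r)) (push w g)⟩
      ⟨.exec, a, g⟩ := by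
  rw [← push_append, ← hr, ← count_program]
  exact reaches_jumpCode (isBlock_program P) hw a g

theorem reaches_jump_call {w : List Bool} {r : ℕ} (hw : IsBlock w) (hr : w.count true = r)
    (a g : ℤ) :
    Reaches (program P) ⟨.exec, a, push (jumpCode (4 * P.length + 1 + r)) (push (w ++ callCode) g)⟩
      ⟨.skip, a, push (program P) g⟩ := by
  rw [push_append w]
  exact (reaches_jump_block hw hr _ _).trans (reachesPos_callCode _ _).to_reflTransGen

theorem isBlock_zeroCode_append (l : List Instr) : IsBlock (zeroCode ++ entries P.length l) :=
  (isBlock_concat [false]).append (isBlock_entries _ _)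

theorem count_zeroCode_append (l : List Instr) :
    (zeroCode ++ entries P.length l).count true = 4 * l.length + 1 := by
  simp [count_entries]

theorem reaches_frame (i h n : ℕ) (a g : ℤ) :
    Reaches (program P) ⟨.exec, token n a, push (frame P i h) g⟩
      ⟨.skip, token (h + n) a, push (program P) g⟩ := by
  rw [frame, resumeCode, List.append_assoc, List.append_assoc, push_append, push_append,
    ← List.append_assoc zeroCode, ← pushOnes_token]
  exact (reaches_onesCode _ _ _).trans
    (reaches_jump_call (isBlock_zeroCode_append _) (count_zeroCode_append _) _ _)

theorem reachesPos_save {b h : ℕ} (hI : P[i]? = some (.save b h)) (a g : ℤ) :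
    ReachesPos (program P) ⟨.skip, token (4 * i) a, push (program P) g⟩
      ⟨.skip, pushOnes b a, push (program P) (push (frame P i h) g)⟩ := by
  refine (reachesPos_dispatch hI a g).trans_left ?_
  rw [entry, push_append, push_append, ← push_append (resumeCode _ _ _)]
  exact (reaches_onesCode _ _ _).trans (reachesPos_callCode _ _).to_reflTransGen

theorem reachesPos_load {h b : ℕ} (hI : P[i]? = some (.load h b)) (a g : ℤ) :
    ReachesPos (program P) ⟨.skip, token (4 * i) a, push (program P) g⟩
      ⟨.exec, token b (token h a), g⟩ := by
  refine (reachesPos_dispatch hI a g).trans_left ?_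
  rw [entry, push_append, push_append]
  exact (reaches_tokenCode _ _ _).trans ((reaches_tokenCode _ _ _).trans
    (reaches_jump_block (isBlock_concat _) (by simp [count_entries]) _ _))

theorem reachesPos_goto {n : ℕ} (hI : P[i]? = some (.goto n)) (a g : ℤ) :
    ReachesPos (program P) ⟨.skip, token (4 * i) a, push (program P) g⟩
      ⟨.skip, token n a, push (program P) g⟩ := by
  refine (reachesPos_dispatch hI a g).trans_left ?_
  rw [entry, push_append, push_append, ← push_append zeroCode, ← List.append_assoc]
  exact (reaches_tokenCode _ _ _).trans
    (reaches_jump_call (isBlock_zeroCode_append _) (count_zeroCode_append _) _ _)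

theorem reachesPos_store {h n : ℕ} (hI : P[i]? = some (.store h n)) (a g : ℤ) :
    ReachesPos (program P) ⟨.skip, token (4 * i) a, push (program P) g⟩
      ⟨.skip, token n (token h a), push (program P) g⟩ := by
  refine (reachesPos_dispatch hI a g).trans_left ?_
  rw [entry, push_append, push_append]
  exact (reaches_tokenCode _ _ _).trans ((reaches_tokenCode _ _ _).trans
    (reaches_jump_call (isBlock_entries _ _) (count_entries _ _) _ _))

end Program

/-! ### Simulating a Turing machine -/

section TuringMachine

open Turing

/-- A numbering of the symbols and of a supporting set of states of a Turing machine, by means of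
which the machine is translated into a program for the stack machine. -/
structure Numbering {Γ Λ : Type*} [Inhabited Γ] [Inhabited Λ] (M : TM0.Machine Γ Λ) where
  symCount : ℕ
  sym : Γ → ℕ
  unsym : ℕ → Γ
  unsym_sym : ∀ x, unsym (sym x) = x
  sym_lt : ∀ x, sym x < symCount
  sym_default : sym default = 0
  states : Set Λ
  supports : TM0.Supports M states
  stateCount : ℕ
  state : Λ → ℕ
  unstate : ℕ → Λ
  unstate_state : ∀ q ∈ states, unstate (state q) = q
  state_lt : ∀ q ∈ states, state q < stateCount

/-- The stack holding the part `l` of the tape to the left of the head, nearest cell first: a token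
for each symbol, above a token marking the bottom. -/
def encodeLeft {Γ : Type*} (m : ℕ) (sym : Γ → ℕ) (l : List Γ) : ℤ :=
  l.foldr (fun x a => token (4 * sym x) a) (token (4 * m) (-1))

namespace Numbering

variable {Γ Λ : Type*} [Inhabited Γ] [Inhabited Λ] {M : TM0.Machine Γ Λ} (N : Numbering M)

/-- The number of ones in the token calling the first entry of row `k` of the program. -/
def rowOnes (k : ℕ) : ℕ := 4 * ((N.symCount + 1) * k)

/-- The instruction that carries out a transition of the Turing machine reading the symbol number
`h`. -/
def action (h : ℕ) : Option (Λ × TM0.Stmt Γ) → Instr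
  | none => .save (N.rowOnes 1) (4 * h)
  | some (q, .move .left) => .save (N.rowOnes (N.state q + 2)) (4 * h)
  | some (q, .move .right) => .load (4 * h) (N.rowOnes (N.state q + 2))
  | some (q, .write x) => .goto (N.rowOnes (N.state q + 2) + 4 * N.sym x)

/-- The entry in row `k` and column `h` of the program. Row `0` moves the head to the beginning of
the input, row `1` erases the tape after the Turing machine has halted, and row `k + 2` belongs to
the state number `k`. The last column corresponds to the marker of the bottom of the left tape. -/
def instr : ℕ → ℕ → Instr
  | 0, h => if h = N.symCount then .load (4 * h) (N.rowOnes (N.state default + 2))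
      else .save 0 (4 * h)
  | 1, h => .save (N.rowOnes 1) (4 * h)
  | k + 2, h => if h = N.symCount then .store (4 * h) (N.rowOnes (k + 2))
      else N.action h (M (N.unstate k) (N.unsym h))

/-- All entries of the program, row by row. -/
def table : List Instr :=
  (List.range ((N.symCount + 1) * (N.stateCount + 2))).map
    fun i => N.instr (i / (N.symCount + 1)) (i % (N.symCount + 1))

/-- The program simulating the Turing machine. -/
def code : List Bool := program N.table

/-- The stack holding the part `l` of the tape to the left of the head. -/
abbrev left (l : List Γ) : ℤ := encodeLeft N.symCount N.sym l

/-- The code stack `g` holds the part `l` of the tape to the right of the head: one frame for each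
symbol, above a stack of ones. -/
inductive IsRight : List Γ → ℤ → Prop
  | nil : IsRight [] (-1)
  | cons (x : Γ) {l : List Γ} {g : ℤ} (i : ℕ) (h : IsRight l g) :
      IsRight (x :: l) (push (frame N.table i (4 * N.sym x)) g)

/-- The configuration in which the entry in row `k` and column `h` is called. -/
def call (k h : ℕ) (a g : ℤ) : Config :=
  ⟨.skip, token (4 * ((N.symCount + 1) * k + h)) a, push N.code g⟩

/-- The configuration in which row `k` is called, in the column given by the first cell of the left
tape. -/
def enter (k : ℕ) (ls : List Γ) (g : ℤ) : Config :=
  ⟨.skip, pushOnes (N.rowOnes k) (N.left ls), push N.code g⟩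

theorem rowOnes_add (k h : ℕ) : N.rowOnes k + 4 * h = 4 * ((N.symCount + 1) * k + h) := by
  rw [rowOnes]; ring

theorem enter_nil (k : ℕ) (g : ℤ) : N.enter k [] g = N.call k N.symCount (-1) g := by
  simp only [enter, call, left, encodeLeft, List.foldr_nil, pushOnes_token, rowOnes_add]

theorem enter_cons (k : ℕ) (x : Γ) (ls : List Γ) (g : ℤ) :
    N.enter k (x :: ls) g = N.call k (N.sym x) (N.left ls) g := by
  simp only [enter, call, left, encodeLeft, List.foldr_cons, pushOnes_token, rowOnes_add]

variable {N} {k h : ℕ}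

theorem table_getElem? (hk : k < N.stateCount + 2) (hh : h ≤ N.symCount) :
    N.table[(N.symCount + 1) * k + h]? = some (N.instr k h) := by
  have hlt : (N.symCount + 1) * k + h < (N.symCount + 1) * (N.stateCount + 2) := by nlinarith
  have hdiv : ((N.symCount + 1) * k + h) / (N.symCount + 1) = k := by
    rw [Nat.mul_add_div (by omega), Nat.div_eq_of_lt (by omega), add_zero]
  have hmod : ((N.symCount + 1) * k + h) % (N.symCount + 1) = h := by
    rw [Nat.mul_add_mod, Nat.mod_eq_of_lt (by omega)]
  rw [table, List.getElem?_map, List.getElem?_range hlt, Option.map_some, hdiv, hmod]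

theorem IsRight.exists_eq_push {l : List Γ} {g : ℤ} (hg : N.IsRight l g) :
    ∃ w, g = push w (-1) := by
  induction hg with
  | nil => exact ⟨[], rfl⟩
  | cons x i _ ih =>
    obtain ⟨w, rfl⟩ := ih
    exact ⟨_, (push_append _ _ _).symm⟩

theorem reaches_pop {rs : List Γ} {g : ℤ} (hg : N.IsRight rs g) (k : ℕ) (a : ℤ) :
    ∃ g', N.IsRight rs.tail g' ∧
      Reaches N.code ⟨.exec, token (N.rowOnes k) a, g⟩ (N.call k (N.sym rs.headI) a g') := by
  cases hg with
  | nil =>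
    refine ⟨-1, .nil, ?_⟩
    have hcall := reachesPos_callCode (Z := N.code) (token (N.rowOnes k) a) (-1)
    rw [List.headI_nil, N.sym_default]
    exact hcall.to_reflTransGen
  | cons x i hg =>
    refine ⟨_, hg, ?_⟩
    rw [call, ← rowOnes_add, add_comm]
    exact reaches_frame i _ _ _ _

theorem reachesPos_call_save {b j : ℕ} (hk : k < N.stateCount + 2) (hh : h ≤ N.symCount)
    (hI : N.instr k h = .save b j) (a g : ℤ) :
    ReachesPos N.code (N.call k h a g) ⟨.skip, pushOnes b a,
      push N.code (push (frame N.table ((N.symCount + 1) * k + h) j) g)⟩ :=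
  reachesPos_save ((table_getElem? hk hh).trans (congrArg some hI)) a g

theorem reachesPos_call_load {j b : ℕ} (hk : k < N.stateCount + 2) (hh : h ≤ N.symCount)
    (hI : N.instr k h = .load j b) (a g : ℤ) :
    ReachesPos N.code (N.call k h a g) ⟨.exec, token b (token j a), g⟩ :=
  reachesPos_load ((table_getElem? hk hh).trans (congrArg some hI)) a g

theorem good_enter_one (ls : List Γ) (w : List Bool) :
    Good N.code (N.enter 1 ls (push w (-1))) := by
  induction ls generalizing w with
  | nil =>
    have hsave := reachesPos_call_save (N := N) (k := 1) (by omega) le_rfl rfl (-1) (push w (-1))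
    rw [enter_nil, Reaches.good_iff hsave.to_reflTransGen, pushOnes_neg_one, ← push_append,
      ← push_append]
    exact good_skip_neg_one _
  | cons x ls ih =>
    have hsave := reachesPos_call_save (k := 1) (by omega) (N.sym_lt x).le rfl (N.left ls)
      (push w (-1))
    rw [enter_cons, Reaches.good_iff hsave.to_reflTransGen, ← push_append (frame _ _ _)]
    exact ih _

/-- The stack machine configuration `d` represents the Turing machine configuration `c`. -/
def Simulates (N : Numbering M) (c : TM0.Cfg Γ Λ) (d : Config) : Prop :=
  c.q ∈ N.states ∧ ∃ ls rs g, N.IsRight rs g ∧ c.Tape.left = ListBlank.mk ls ∧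
    c.Tape.right = ListBlank.mk rs ∧ d = N.call (N.state c.q + 2) (N.sym c.Tape.head) (N.left ls) g

section Steps

variable {q : Λ} {T : Tape Γ} {d : Config} {ls rs : List Γ} {g : ℤ}

theorem instr_state (hq : q ∈ N.states) (x : Γ) :
    N.instr (N.state q + 2) (N.sym x) = N.action (N.sym x) (M q x) := by
  rw [instr, if_neg (N.sym_lt x).ne, N.unstate_state q hq, N.unsym_sym]

theorem exists_simulates_enter (hq : q ∈ N.states) (hg : N.IsRight rs g)
    (hl : T.left = ListBlank.mk ls) (hr : (T.move .left).right = ListBlank.mk rs) :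
    ∃ d, Reaches N.code (N.enter (N.state q + 2) ls g) d ∧
      N.Simulates ⟨q, T.move .left⟩ d := by
  cases ls with
  | cons y ls =>
    rw [enter_cons]
    exact ⟨_, .refl, hq, ls, rs, g, hg, by simp [Tape.move, hl], hr, by simp [Tape.move, hl]⟩
  | nil =>
    have hstore := reachesPos_store ((table_getElem? (N := N) (k := N.state q + 2)
      (Nat.add_lt_add_right (N.state_lt q hq) 2) le_rfl).trans
        (congrArg some (by rw [instr, if_pos rfl]))) (-1) g
    have hhead : (ListBlank.mk ([] : List Γ)).head = default := rfl
    rw [enter_nil]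
    refine ⟨_, hstore.to_reflTransGen, hq, [], rs, g, hg, by simp [Tape.move, hl], hr, ?_⟩
    simp [Tape.move, hl, call, left, encodeLeft, N.sym_default, hhead, rowOnes, code]

theorem good_of_halted {c : TM0.Cfg Γ Λ} (hsim : N.Simulates c d)
    (hc : TM0.step M c = none) : Good N.code d := by
  obtain ⟨q, T⟩ := c
  obtain ⟨hq, ls, rs, g, hg, -, -, rfl⟩ := hsim
  obtain ⟨w, rfl⟩ := hg.exists_eq_push
  have hM : M q T.head = none := by simpa [TM0.step] using hc
  have hsave := reachesPos_call_save (Nat.add_lt_add_right (N.state_lt q hq) 2)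
    (N.sym_lt T.head).le ((instr_state hq _).trans (by rw [hM]; rfl)) (N.left ls) (push w (-1))
  rw [Reaches.good_iff hsave.to_reflTransGen, ← push_append (frame _ _ _)]
  exact good_enter_one ls _

theorem exists_simulates_step {c c' : TM0.Cfg Γ Λ} (hsim : N.Simulates c d)
    (hc : TM0.step M c = some c') : ∃ d', N.Simulates c' d' ∧ ReachesPos N.code d d' := by
  have hq' := TM0.step_supports M N.supports hc hsim.1
  obtain ⟨q, T⟩ := c
  obtain ⟨hq, ls, rs, g, hg, hl, hr, rfl⟩ := hsim
  obtain ⟨⟨q', stmt⟩, hM, rfl⟩ := Option.map_eq_some_iff.1 hc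
  have hk := Nat.add_lt_add_right (N.state_lt q hq) 2
  have hh := (N.sym_lt T.head).le
  have hI := instr_state hq T.head
  rw [hM] at hI
  dsimp only at hl hr
  rcases stmt with (_ | _) | x
  · have hsave := reachesPos_call_save hk hh hI (N.left ls) g
    obtain ⟨d', hreach, hsim⟩ := exists_simulates_enter (T := T) hq' (hg.cons T.head _) hl
      (by simp [Tape.move, hr])
    exact ⟨d', hsim, hsave.trans_left hreach⟩
  · have hload := reachesPos_call_load hk hh hI (N.left ls) g
    obtain ⟨g', hg', hpop⟩ := reaches_pop hg (N.state q' + 2) (N.left (T.head :: ls))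
    refine ⟨_, ⟨hq', T.head :: ls, rs.tail, g', hg', ?_, ?_, ?_⟩, hload.trans_left hpop⟩
    · simp [Tape.move, hl]
    · simp [Tape.move, hr]
    · simp [Tape.move, hr]
  · have hgoto := reachesPos_goto ((table_getElem? hk hh).trans (congrArg some hI)) (N.left ls) g
    rw [rowOnes_add] at hgoto
    exact ⟨_, ⟨hq', ls, rs, g, hg, hl, hr, rfl⟩, hgoto⟩

end Steps

theorem Simulates.good_iff {c : TM0.Cfg Γ Λ} {d : Config} (hsim : N.Simulates c d) :
    Good N.code d ↔ (StateTransition.eval (TM0.step M) c).Dom := by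
  constructor
  · contrapose
    intro hdom
    refine not_good_of_progress
      (P := fun d => ∃ c, N.Simulates c d ∧ ¬ (StateTransition.eval (TM0.step M) c).Dom)
      ?_ ?_ ⟨c, hsim, hdom⟩
    · rintro _ ⟨c, ⟨-, ls, rs, g, -, -, -, rfl⟩, -⟩
      exact token_ne_neg_one _ _
    · rintro d ⟨c, hsim, hdom⟩
      cases hc : TM0.step M c with
      | none =>
        exact absurd (Part.dom_iff_mem.2 ⟨c, StateTransition.mem_eval.2 ⟨.refl, hc⟩⟩) hdom
      | some c' =>
        obtain ⟨d', hsim', hreach⟩ := exists_simulates_step hsim hc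
        rw [StateTransition.reaches_eval (.single hc)] at hdom
        exact ⟨d', ⟨c', hsim', hdom⟩, hreach⟩
  · rw [Part.dom_iff_mem]
    rintro ⟨b, hb⟩
    refine StateTransition.evalInduction
      (C := fun c => ∀ d, N.Simulates c d → Good N.code d) hb ?_ d hsim
    intro c _ ih d hsim
    cases hstep : TM0.step M c with
    | none => exact good_of_halted hsim hstep
    | some c' =>
      obtain ⟨d', hsim', hreach⟩ := exists_simulates_step hsim hstep
      rw [Reaches.good_iff hreach.to_reflTransGen]
      exact ih c' hstep d' hsim'

theorem exists_simulates_rewind (ls : List Γ) {rs : List Γ} {g : ℤ} (hg : N.IsRight rs g) :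
    ∃ d, Reaches N.code (N.enter 0 ls g) d ∧
      N.Simulates ⟨default, Tape.mk₁ (ls.reverse ++ rs)⟩ d := by
  induction ls generalizing rs g with
  | nil =>
    have hload := reachesPos_call_load (N := N) (k := 0) (by omega) le_rfl (if_pos rfl) (-1) g
    obtain ⟨g', hg', hpop⟩ := reaches_pop hg (N.state default + 2) (N.left [])
    rw [enter_nil]
    exact ⟨_, hload.to_reflTransGen.trans hpop, N.supports.1, [], _, g', hg', rfl,
      by simp [Tape.mk₁, Tape.mk₂], by simp [Tape.mk₁, Tape.mk₂]⟩
  | cons x ls ih =>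
    have hsave := reachesPos_call_save (k := 0) (by omega) (N.sym_lt x).le
      (if_neg (N.sym_lt x).ne) (N.left ls) g
    obtain ⟨d, hreach, hsim⟩ := ih (hg.cons x _)
    rw [enter_cons]
    refine ⟨d, hsave.to_reflTransGen.trans ?_, by simpa using hsim⟩
    simpa only [enter, rowOnes, mul_zero, pushOnes_zero] using hreach

theorem good_left_reverse_iff (l : List Γ) :
    Good N.code ⟨.exec, N.left l.reverse, -1⟩ ↔ (TM0.eval M l).Dom := by
  obtain ⟨d, hreach, hsim⟩ := exists_simulates_rewind l.reverse (IsRight.nil (N := N))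
  have hcall := reachesPos_callCode (Z := N.code) (N.left l.reverse) (-1)
  have hstart : Reaches N.code ⟨.exec, N.left l.reverse, -1⟩ (N.enter 0 l.reverse (-1)) := by
    simp only [enter, rowOnes, mul_zero, pushOnes_zero]
    exact hcall.to_reflTransGen
  rw [Reaches.good_iff (hstart.trans hreach), hsim.good_iff]
  simp [TM0.eval, TM0.init]

end Numbering

theorem exists_injective_nat_of_finite (Γ : Type*) [Inhabited Γ] [Finite Γ] :
    ∃ (m : ℕ) (sym : Γ → ℕ), Function.Injective sym ∧ (∀ x, sym x < m) ∧ sym default = 0 := by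
  have : NeZero (Nat.card Γ) := ⟨Nat.card_pos.ne'⟩
  let e := Finite.equivFin Γ
  exact ⟨Nat.card Γ, fun x => Equiv.swap (e default) 0 (e x),
    Fin.val_injective.comp ((Equiv.injective _).comp e.injective), fun x => Fin.isLt _, by simp⟩

theorem exists_numbering {Γ Λ : Type*} [Inhabited Γ] [Inhabited Λ] [Finite Γ]
    {M : TM0.Machine Γ Λ} {S : Set Λ} [Finite S] (hS : TM0.Supports M S) :
    Nonempty (Numbering M) := by
  classical
  obtain ⟨m, sym, hsym, hlt, hdefault⟩ := exists_injective_nat_of_finite Γ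
  let state : Λ → ℕ := fun q => if h : q ∈ S then Finite.equivFin S ⟨q, h⟩ else 0
  have hstate : ∀ q (h : q ∈ S), state q = Finite.equivFin S ⟨q, h⟩ := fun q h => dif_pos h
  have hinj : S.InjOn state := fun p hp q hq h => by
    rw [hstate p hp, hstate q hq] at h
    exact congrArg Subtype.val ((Finite.equivFin S).injective (Fin.ext h))
  exact ⟨⟨m, sym, Function.invFun sym, Function.leftInverse_invFun hsym, hlt, hdefault, S, hS,
    Nat.card S, state, Function.invFunOn state S, fun q hq => hinj.leftInvOn_invFunOn hq,
    fun q hq => (hstate q hq).trans_lt (Fin.isLt _)⟩⟩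

theorem exists_program_good_iff {Γ Λ : Type*} [Inhabited Γ] [Inhabited Λ] [Finite Γ]
    {M : TM0.Machine Γ Λ} {S : Set Λ} [Finite S] (hS : TM0.Supports M S) :
    ∃ (Z : List Bool) (m : ℕ) (sym : Γ → ℕ), Z ≠ [] ∧
      ∀ l : List Γ, Good Z ⟨.exec, encodeLeft m sym l.reverse, -1⟩ ↔ (TM0.eval M l).Dom := by
  obtain ⟨N⟩ := exists_numbering hS
  exact ⟨N.code, N.symCount, N.sym, program_ne_nil _, N.good_left_reverse_iff⟩

end TuringMachine

/-! ### A universal program -/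

section PartialRecursive

open Turing PartrecToTM2

theorem trNat_eq_map_bits (n : ℕ) :
    trNat n = n.bits.map fun b => bif b then Γ'.bit1 else Γ'.bit0 := by
  have htrNum : ∀ (b : Bool) (k : Num), (k = 0 → b = true) →
      trNum (cond b k.bit1 k.bit0) = (bif b then Γ'.bit1 else Γ'.bit0) :: trNum k := by
    rintro (_ | _) (_ | k) h
    · exact absurd (h rfl) (by decide)
    all_goals rfl
  induction n using Nat.binaryRec' with
  | zero => simp
  | bit b n hn ih =>
    rw [Nat.bits_append_bit n b hn, List.map_cons, ← ih]
    simp only [trNat, ← Num.ofNat'_eq, Num.ofNat'_bit]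
    have := htrNum b (Num.ofNat' n) fun h => hn <| by
      rw [Num.ofNat'_eq] at h
      exact_mod_cast h
    cases b <;> exact this

instance : Finite K' := by
  refine Finite.of_surjective (![K'.main, K'.rev, K'.aux, K'.stack]) ?_
  rintro (_ | _ | _ | _)
  exacts [⟨0, rfl⟩, ⟨1, rfl⟩, ⟨2, rfl⟩, ⟨3, rfl⟩]

theorem tm2_eval_dom [Inhabited Λ'] {c : ToPartrec.Code} (h : default = trNormal c .halt)
    (v : List ℕ) :
    (TM2.eval (Γ := fun _ => Γ') PartrecToTM2.tr K'.main (trList v)).Dom ↔ (c.eval v).Dom := by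
  have hinit : (TM2.init K'.main (trList v) : Cfg') = PartrecToTM2.init c v := by
    simp only [TM2.init, PartrecToTM2.init, h]
    congr 1
    funext k
    cases k <;> rfl
  change (StateTransition.eval _ (TM2.init K'.main (trList v) : Cfg')).Dom ↔ _
  rw [hinit, PartrecToTM2.tr_eval]
  rfl

/-- The symbol of the one-tape machine for a cell of the main stack holding `x`, the other stacks
being empty at that height. -/
def mainCell (bottom : Bool) (x : Γ') : TM2to1.Γ' K' fun _ => Γ' :=
  (bottom, Function.update (fun _ => none) K'.main (some x))

theorem reverse_trInit (v : List Γ') :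
    (TM2to1.trInit (Γ := fun _ => Γ') K'.main (v ++ [Γ'.cons])).reverse =
      v.map (mainCell false) ++ [mainCell true .cons] := by
  rw [TM2to1.trInit, List.reverse_concat]
  change (mainCell true .cons :: v.reverse.map (mainCell false)).reverse = _
  rw [List.reverse_cons, List.map_reverse, List.reverse_reverse]

/-- The stack with the binary digits of a number `n` as tokens `f b`, above `base`. -/
def encodeNat (f : Bool → ℕ) (base : ℤ) (n : ℕ) : ℤ :=
  n.bits.foldr (fun b a => token (f b) a) base

theorem exists_program_eval_iff (c : ToPartrec.Code) :
    ∃ (Z : List Bool) (f : Bool → ℕ) (base : ℤ), Z ≠ [] ∧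
      ∀ n, Good Z ⟨.exec, encodeNat f base n, -1⟩ ↔ (c.eval [n]).Dom := by
  classical
  let _ : Inhabited Λ' := ⟨trNormal c .halt⟩
  let _ : Fintype K' := Fintype.ofFinite _
  have hS₂ := PartrecToTM2.tr_supports c .halt
  have hS₁ := TM2to1.tr_supports (M := PartrecToTM2.tr) hS₂
  have hS₀ := TM1to0.tr_supports (M := TM2to1.tr PartrecToTM2.tr) hS₁
  obtain ⟨Z, m, sym, hZ, hgood⟩ := exists_program_good_iff hS₀
  refine ⟨Z, fun b => 4 * sym (mainCell false (bif b then .bit1 else .bit0)),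
    token (4 * sym (mainCell true .cons)) (token (4 * m) (-1)), hZ, fun n => ?_⟩
  have hinput := hgood (TM2to1.trInit K'.main (trList [n]))
  have htm1 := TM2to1.tr_eval_dom (M := PartrecToTM2.tr) K'.main (trList [n])
  have htm2 := tm2_eval_dom (c := c) rfl [n]
  rw [TM1to0.tr_eval] at hinput
  rw [← htm2, ← htm1, ← hinput]
  simp only [trList, reverse_trInit, trNat_eq_map_bits, encodeLeft, encodeNat, List.foldr_append,
    List.foldr_map, List.foldr_cons, List.foldr_nil]

end PartialRecursive

theorem primrec_token (n : ℕ) : Primrec (token n) := by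
  have : Primrec fun a : ℤ => 2 ^ n * 2 * a + (2 ^ n - 1) :=
    GLPrimcodable.primrec_int_add.comp
      (GLPrimcodable.primrec_int_mul.comp (.const _) .id) (.const _)
  exact this.of_eq fun a => by simp only [token, pushOnes]; ring

theorem primrec_encodeNat (f : Bool → ℕ) (base : ℤ) : Primrec (encodeNat f base) := by
  let next : List ℤ → ℤ := fun l =>
    if l.length = 0 then base
    else if l.length % 2 = 1 then token (f true) (l.getD (l.length / 2) 0)
    else token (f false) (l.getD (l.length / 2) 0)
  have hlength : Primrec fun p : Unit × List ℤ => p.2.length := Primrec.list_length.comp .snd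
  have hhalf : Primrec fun p : Unit × List ℤ => p.2.getD (p.2.length / 2) 0 :=
    (Primrec.list_getD 0).comp .snd (Primrec.nat_div.comp hlength (.const 2))
  have hnext : Primrec₂ fun (_ : Unit) l => some (next l) :=
    Primrec.option_some.comp₂ <| .mk <|
      .ite (PrimrecRel.comp Primrec.eq hlength (.const 0)) (.const _) <|
      .ite (PrimrecRel.comp Primrec.eq (Primrec.nat_mod.comp hlength (.const 2)) (.const 1))
        ((primrec_token _).comp hhalf) ((primrec_token _).comp hhalf)
  refine (Primrec.nat_strong_rec (fun _ => encodeNat f base) hnext fun _ n => ?_).comp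
    (.const ()) .id
  simp only [next, List.length_map, List.length_range, Option.some.injEq]
  induction n using Nat.binaryRec' with
  | zero => simp [encodeNat]
  | bit b n hn _ =>
    have hne : Nat.bit b n ≠ 0 := fun h => by simp_all [Nat.bit_eq_zero_iff]
    have hlt : n < Nat.bit b n := by grind [Nat.bit_val]
    have hget : ((List.range (Nat.bit b n)).map (encodeNat f base)).getD n 0 =
        encodeNat f base n := by
      simp [List.getD, hlt]
    rw [if_neg hne, Nat.bit_div_two, Nat.bit_mod_two, hget, encodeNat, encodeNat,
      Nat.bits_append_bit n b hn]
    cases b <;> rfl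

theorem exists_program_not_computablePred :
    ∃ Z : List Bool, Z ≠ [] ∧ ¬ ComputablePred fun a : ℤ => Good Z ⟨.exec, a, -1⟩ := by
  have hpartrec : Partrec fun n : ℕ => (Denumerable.ofNat Nat.Partrec.Code n).eval 0 :=
    Nat.Partrec.Code.eval_part.comp (Computable.ofNat _) (Computable.const 0)
  obtain ⟨c, hc⟩ := Turing.ToPartrec.Code.exists_code (Nat.Partrec'.part_iff₁.2 hpartrec)
  obtain ⟨Z, f, base, hZ, hgood⟩ := exists_program_eval_iff c
  refine ⟨Z, hZ, fun h => ComputablePred.halting_problem 0 ?_⟩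
  refine ComputablePred.computable_of_manyOneReducible
    ⟨fun d => encodeNat f base (Encodable.encode d),
      (primrec_encodeNat f base).to_comp.comp Computable.encode, fun d => ?_⟩ h
  have hd := hc (Encodable.encode d ::ᵥ List.Vector.nil)
  simp only [List.Vector.head_cons, Denumerable.ofNat_encode] at hd
  rw [hgood, show [Encodable.encode d] = (Encodable.encode d ::ᵥ List.Vector.nil).1 from rfl, hd]
  rfl

/-! ### The machine group -/

theorem push_eq (w : List Bool) (g : ℤ) : push w g = 2 ^ w.length * g + push w 0 := by
  induction w with
  | nil => simp
  | cons b w ih => simp only [push_cons, Int.bit_val, List.length_cons, ih, pow_succ]; ring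

/-- The images in a group of the four generators of the machine group. Conjugation of `τ` by
`x ^ a * y ^ g` represents a configuration with stacks `a` and `g`; the elements `p` and `q` double
the exponent of `x` and of `y`, respectively, and the involution `v` exchanges `x`, `p` with
`y`, `q`. -/
@[ext]
structure Letters (G : Type*) where
  x : G
  p : G
  v : G
  τ : G

namespace Letters

open MulAut (conj)

variable {G H : Type*} [Group G] [Group H] (L : Letters G)

/-- The letters acting on the code stack as `x` does on the data stack. -/
def y : G := conj L.v L.x

/-- The letter acting on the code stack as `p` does on the data stack. -/
def q : G := conj L.v L.p

/-- The element representing the configuration with empty stacks in a given phase. -/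
def tau : Phase → G
  | .exec => L.τ
  | .skip => conj L.p L.τ
  | .scan => conj L.p⁻¹ (conj L.x (conj L.p L.τ))

/-- Conjugation by the element of `⟨x, y⟩` that represents a pair of stacks. -/
def shift (a g : ℤ) : MulAut G := conj (L.x ^ a * L.y ^ g)

/-- The element of the group representing a configuration. -/
def config (c : Config) : G := L.shift c.data c.code (L.tau c.phase)

/-- The defining relations of the machine group of the program `Z`. The first four describe the
action of the letters on the stacks, and the others are the steps of the machine. -/
structure Satisfies (Z : List Bool) : Prop where
  v_mul_v : L.v * L.v = 1
  x_mul_y : L.x * L.y = L.y * L.x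
  p_x : conj L.p L.x = L.x * L.x
  p_y : conj L.p L.y = L.y
  scan_zero : conj L.q (L.tau .scan) = L.tau .scan
  scan_one : conj L.q (L.tau .skip) = conj L.y (L.tau .scan)
  exec_zero_zero : conj L.q⁻¹ (conj L.q⁻¹ L.τ) = conj L.p⁻¹ (conj L.x L.τ)
  exec_zero_one : conj L.q⁻¹ (conj L.y (conj L.q⁻¹ L.τ)) = conj L.p⁻¹ L.τ
  exec_one : conj (L.q ^ Z.length) (conj L.p (conj L.q⁻¹ (conj L.y L.τ))) =
    conj (L.y ^ push Z 0) (conj L.p (L.tau .skip))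

/-- The relators corresponding to the relations in `Letters.Satisfies`. -/
def relator (Z : List Bool) : Fin 9 → G :=
  ![L.v * L.v, L.x * L.y / (L.y * L.x), conj L.p L.x / (L.x * L.x), conj L.p L.y / L.y,
    conj L.q (L.tau .scan) / L.tau .scan, conj L.q (L.tau .skip) / conj L.y (L.tau .scan),
    conj L.q⁻¹ (conj L.q⁻¹ L.τ) / conj L.p⁻¹ (conj L.x L.τ),
    conj L.q⁻¹ (conj L.y (conj L.q⁻¹ L.τ)) / conj L.p⁻¹ L.τ,
    conj (L.q ^ Z.length) (conj L.p (conj L.q⁻¹ (conj L.y L.τ))) /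
      conj (L.y ^ push Z 0) (conj L.p (L.tau .skip))]

variable {L}

theorem satisfies_iff {Z : List Bool} : L.Satisfies Z ↔ ∀ i, L.relator Z i = 1 := by
  constructor
  · rintro ⟨h₀, h₁, h₂, h₃, h₄, h₅, h₆, h₇, h₈⟩ i
    fin_cases i
    · exact h₀
    all_goals exact div_eq_one.2 ‹_›
  · exact fun h => ⟨h 0, div_eq_one.1 (h 1), div_eq_one.1 (h 2), div_eq_one.1 (h 3),
      div_eq_one.1 (h 4), div_eq_one.1 (h 5), div_eq_one.1 (h 6), div_eq_one.1 (h 7),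
      div_eq_one.1 (h 8)⟩

section Map

/-- The images of the letters under a homomorphism. -/
def map (f : G →* H) (L : Letters G) : Letters H := ⟨f L.x, f L.p, f L.v, f L.τ⟩

variable (f : G →* H) (L)

theorem map_conj (a b : G) : f (conj a b) = conj (f a) (f b) := by simp

@[simp] theorem map_x : (L.map f).x = f L.x := rfl

@[simp] theorem map_p : (L.map f).p = f L.p := rfl

@[simp] theorem map_v : (L.map f).v = f L.v := rfl

@[simp] theorem map_τ : (L.map f).τ = f L.τ := rfl

@[simp] theorem map_y : (L.map f).y = f L.y := (map_conj f _ _).symm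

@[simp] theorem map_q : (L.map f).q = f L.q := (map_conj f _ _).symm

@[simp] theorem map_tau (s : Phase) : (L.map f).tau s = f (L.tau s) := by
  cases s <;> simp [tau]

theorem map_config (c : Config) : (L.map f).config c = f (L.config c) := by
  simp only [config, shift, map_conj, map_mul f, map_zpow f, map_x, map_y, map_tau]

theorem map_relator (Z : List Bool) (i : Fin 9) : (L.map f).relator Z i = f (L.relator Z i) := by
  fin_cases i <;>
    simp [relator, MulAut.conj_apply, -map_zpow, -map_pow, map_zpow f, map_pow f]

end Map

theorem conj_conj_distrib (a b s : G) : conj a (conj b s) = conj (conj a b) (conj a s) :=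
  map_conj (conj a).toMonoidHom b s

theorem conj_mem_iff {K : Subgroup G} {b s : G} (hb : b ∈ K) : conj b s ∈ K ↔ s ∈ K := by
  rw [MulAut.conj_apply, K.mul_mem_cancel_right (K.inv_mem hb), K.mul_mem_cancel_left hb]

theorem shift_conj_y_zpow (n a g : ℤ) (s : G) :
    L.shift a g (conj (L.y ^ n) s) = L.shift a (g + n) s := by
  rw [shift, shift, ← MulAut.mul_apply, ← map_mul, mul_assoc, ← zpow_add]

theorem shift_conj_y (a g : ℤ) (s : G) : L.shift a g (conj L.y s) = L.shift a (g + 1) s := by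
  simpa only [zpow_one] using shift_conj_y_zpow 1 a g s

namespace Satisfies

variable {Z : List Bool} (hL : L.Satisfies Z)
include hL

theorem shift_conj_x (a g : ℤ) (s : G) : L.shift a g (conj L.x s) = L.shift (a + 1) g s := by
  have hxy : Commute L.x L.y := hL.x_mul_y
  rw [shift, shift, ← MulAut.mul_apply, ← map_mul, mul_assoc, ← (hxy.zpow_right g).eq,
    ← mul_assoc, zpow_add_one]

theorem v_y : conj L.v L.y = L.x := by
  rw [y, ← MulAut.mul_apply, ← map_mul, hL.v_mul_v, map_one, MulAut.one_apply]

theorem q_x : conj L.q L.x = L.x := by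
  simpa only [q, conj_conj_distrib L.v, hL.v_y] using congrArg (conj L.v) hL.p_y

theorem q_y : conj L.q L.y = L.y * L.y := by
  simpa only [q, y, conj_conj_distrib L.v, map_mul] using congrArg (conj L.v) hL.p_x

theorem conj_p_shift (a g : ℤ) (s : G) :
    conj L.p (L.shift a g s) = L.shift (2 * a) g (conj L.p s) := by
  rw [shift, conj_conj_distrib, map_mul, map_zpow, map_zpow, hL.p_x, hL.p_y, ← zpow_two,
    ← zpow_mul, shift]

theorem conj_q_shift (a g : ℤ) (s : G) :
    conj L.q (L.shift a g s) = L.shift a (2 * g) (conj L.q s) := by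
  rw [shift, conj_conj_distrib, map_mul, map_zpow, map_zpow, hL.q_x, hL.q_y, ← zpow_two,
    ← zpow_mul, shift]

section Membership

variable {K : Subgroup G} (hp : L.p ∈ K) (hv : L.v ∈ K)

include hv hp in
omit hL in
theorem q_mem : L.q ∈ K := (conj_mem_iff hv).2 hp

include hp

theorem shift_conj_p_mem (a g : ℤ) (s : G) :
    L.shift (2 * a) g (conj L.p s) ∈ K ↔ L.shift a g s ∈ K := by
  rw [← hL.conj_p_shift, conj_mem_iff hp]

theorem shift_conj_p_inv_mem (a g : ℤ) (s : G) :
    L.shift a g (conj L.p⁻¹ s) ∈ K ↔ L.shift (2 * a) g s ∈ K := by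
  rw [← hL.shift_conj_p_mem hp, map_inv, MulAut.apply_inv_self]

include hv

theorem shift_conj_q_mem (a g : ℤ) (s : G) :
    L.shift a (2 * g) (conj L.q s) ∈ K ↔ L.shift a g s ∈ K := by
  rw [← hL.conj_q_shift, conj_mem_iff (q_mem hp hv)]

theorem shift_conj_q_inv_mem (a g : ℤ) (s : G) :
    L.shift a g (conj L.q⁻¹ s) ∈ K ↔ L.shift a (2 * g) s ∈ K := by
  rw [← hL.shift_conj_q_mem hp hv, map_inv, MulAut.apply_inv_self]

theorem shift_conj_q_pow_mem (n : ℕ) (a g : ℤ) (s : G) :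
    L.shift a (2 ^ n * g) (conj (L.q ^ n) s) ∈ K ↔ L.shift a g s ∈ K := by
  induction n generalizing g s with
  | zero => simp
  | succ n ih =>
    rw [pow_succ, mul_assoc, pow_succ, map_mul conj, MulAut.mul_apply, ih,
      hL.shift_conj_q_mem hp hv]

theorem config_step_exec_mem (a g : ℤ) :
    L.config (step Z ⟨.exec, a, g⟩) ∈ K ↔ L.config ⟨.exec, a, g⟩ ∈ K := by
  rw [step]
  split_ifs with h₀ h₂
  · obtain ⟨m, rfl⟩ : ∃ m, g = 2 * (2 * m) := ⟨g / 4, by omega⟩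
    rw [show 2 * (2 * m) / 4 = m by omega]
    simp only [config, tau]
    rw [← hL.shift_conj_q_inv_mem hp hv, ← hL.shift_conj_q_inv_mem hp hv, hL.exec_zero_zero,
      hL.shift_conj_p_inv_mem hp, hL.shift_conj_x]
  · obtain ⟨m, rfl⟩ : ∃ m, g = 2 * (2 * m + 1) := ⟨g / 4, by omega⟩
    rw [show 2 * (2 * m + 1) / 4 = m by omega]
    simp only [config, tau]
    rw [← hL.shift_conj_q_inv_mem hp hv, ← shift_conj_y, ← hL.shift_conj_q_inv_mem hp hv,
      hL.exec_zero_one, hL.shift_conj_p_inv_mem hp]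
  · obtain ⟨m, rfl⟩ : ∃ m, g = 2 * m + 1 := ⟨g / 2, by omega⟩
    rw [show (2 * m + 1) / 2 = m by omega, push_eq]
    simp only [config]
    rw [← hL.shift_conj_p_mem hp, ← shift_conj_y_zpow, ← hL.exec_one,
      hL.shift_conj_q_pow_mem hp hv, hL.shift_conj_p_mem hp, hL.shift_conj_q_inv_mem hp hv,
      shift_conj_y, tau]

theorem config_step_mem (c : Config) : L.config (step Z c) ∈ K ↔ L.config c ∈ K := by
  obtain ⟨_ | _ | _, a, g⟩ := c
  · exact hL.config_step_exec_mem hp hv a g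
  · rw [step]
    split_ifs with h
    · obtain ⟨m, rfl⟩ : ∃ m, a = 2 * m := ⟨a / 2, by omega⟩
      rw [show 2 * m / 2 = m by omega]
      exact (hL.shift_conj_p_mem hp ..).symm
    · obtain ⟨m, rfl⟩ : ∃ m, a = 2 * m + 1 := ⟨a / 2, by omega⟩
      rw [show (2 * m + 1) / 2 = m by omega]
      simp only [config, tau]
      rw [hL.shift_conj_p_inv_mem hp, hL.shift_conj_x]
  · rw [step]
    split_ifs with h
    · obtain ⟨m, rfl⟩ : ∃ m, g = 2 * m := ⟨g / 2, by omega⟩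
      rw [show 2 * m / 2 = m by omega]
      simp only [config]
      rw [← hL.shift_conj_q_mem hp hv, hL.scan_zero]
    · obtain ⟨m, rfl⟩ : ∃ m, g = 2 * m + 1 := ⟨g / 2, by omega⟩
      rw [show (2 * m + 1) / 2 = m by omega]
      simp only [config]
      rw [← hL.shift_conj_q_mem hp hv, hL.scan_one, shift_conj_y]

theorem config_mem_of_good (htarget : L.config target ∈ K) {c : Config} (hc : Good Z c) :
    L.config c ∈ K := by
  induction hc using Relation.ReflTransGen.head_induction_on with
  | refl => exact htarget
  | head hstep _ ih => exact (hL.config_step_mem hp hv _).1 (hstep ▸ ih)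

end Membership

end Satisfies
end Letters

/-! ### HNN extensions -/

section RestrictHNN

open HNNExtension HNNExtension.NormalWord

variable {G : Type*} [Group G] {A B : Subgroup G}

theorem exists_reducedWord_prod_eq (φ : A ≃* B) (z : HNNExtension G A B φ) :
    ∃ w : ReducedWord G A B, w.prod φ = z := by
  obtain ⟨d⟩ := TransversalPair.nonempty G A B
  refine ⟨(z • (empty : NormalWord d)).toReducedWord, ?_⟩
  simpa [ReducedWord.prod] using prod_smul φ z (empty : NormalWord d)

variable {φ : A ≃* B} {T : Subgroup G} (hT : ∀ a : A, (a : G) ∈ T ↔ (φ a : G) ∈ T)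

/-- The restriction to a subgroup `T` of an isomorphism `φ` that preserves membership in `T`. -/
def restrictEquiv : A.subgroupOf T ≃* B.subgroupOf T where
  toFun a := ⟨⟨φ ⟨a.1.1, a.2⟩, (hT _).1 a.1.2⟩, (φ ⟨a.1.1, a.2⟩).2⟩
  invFun b := ⟨⟨φ.symm ⟨b.1.1, b.2⟩, (hT _).2 (by simp)⟩, (φ.symm ⟨b.1.1, b.2⟩).2⟩
  left_inv a := Subtype.ext <| Subtype.ext <|
    congrArg (Subtype.val : A → G) (φ.symm_apply_apply ⟨a.1.1, a.2⟩)
  right_inv b := Subtype.ext <| Subtype.ext <|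
    congrArg (Subtype.val : B → G) (φ.apply_symm_apply ⟨b.1.1, b.2⟩)
  map_mul' a b := Subtype.ext <| Subtype.ext <|
    congrArg (Subtype.val : B → G) (φ.map_mul ⟨a.1.1, a.2⟩ ⟨b.1.1, b.2⟩)

/-- The homomorphism of HNN extensions induced by the inclusion of a subgroup `T`. -/
def restrictHNN : HNNExtension T _ _ (restrictEquiv hT) →* HNNExtension G A B φ :=
  lift (of.comp T.subtype) t fun a => t_mul_of (φ := φ) ⟨a.1.1, a.2⟩

@[simp] theorem restrictHNN_of (g : T) : restrictHNN hT (of g) = of (g : G) := lift_of _ _ _ _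

@[simp] theorem restrictHNN_t : restrictHNN hT t = t := lift_t _ _ _

/-- The reduced word in `G` with the same letters as a reduced word in the subgroup `T`. -/
def mapReducedWord (w : ReducedWord T (A.subgroupOf T) (B.subgroupOf T)) : ReducedWord G A B where
  head := w.head
  toList := w.toList.map fun x => (x.1, (x.2 : G))
  chain := by
    rw [List.isChain_map]
    refine w.chain.imp fun x y h hmem => h ?_
    rcases Int.units_eq_one_or x.1 with hx | hx <;> rw [hx] at hmem ⊢ <;> exact hmem

theorem mapReducedWord_prod (w : ReducedWord T (A.subgroupOf T) (B.subgroupOf T)) :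
    (mapReducedWord w).prod φ = restrictHNN hT (w.prod (restrictEquiv hT)) := by
  simp only [ReducedWord.prod, mapReducedWord, map_mul, map_list_prod, List.map_map,
    restrictHNN_of]
  congr 2
  exact List.map_congr_left fun x _ => by simp

include hT

theorem comap_of_map_sup_zpowers_t :
    (T.map (of (φ := φ)) ⊔ Subgroup.zpowers t).comap of = T := by
  refine le_antisymm (fun g hg => ?_) (Subgroup.map_le_iff_le_comap.1 le_sup_left)
  have hle : T.map (of (φ := φ)) ⊔ Subgroup.zpowers t ≤ (restrictHNN hT).range := by
    refine sup_le ?_ (Subgroup.zpowers_le.2 ⟨t, restrictHNN_t hT⟩)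
    rintro _ ⟨h, hh, rfl⟩
    exact ⟨of ⟨h, hh⟩, restrictHNN_of hT _⟩
  obtain ⟨z, hz⟩ := hle hg
  obtain ⟨w, rfl⟩ := exists_reducedWord_prod_eq _ z
  rw [← mapReducedWord_prod] at hz
  have hnil := ReducedWord.toList_eq_nil_of_mem_of_range φ (mapReducedWord w) ⟨g, hz.symm⟩
  rw [ReducedWord.prod, hnil] at hz
  have hhead : (w.head : G) = g := of_injective (φ := φ) (by simpa [mapReducedWord] using hz)
  exact hhead ▸ w.head.2

end RestrictHNN

universe u v

theorem exists_conj_extension {G : Type u} {W : Type v} [Group G] [Group W] {a c : W →* G}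
    (ha : Function.Injective a) (hc : Function.Injective c) :
    ∃ (M : Type u) (_ : Group M) (o : G →* M) (s : M), Function.Injective o ∧
      (∀ w, MulAut.conj s (o (a w)) = o (c w)) ∧
      ∀ T : Subgroup G, T.comap a = T.comap c → (T.map o ⊔ Subgroup.zpowers s).comap o = T := by
  let φ : a.range ≃* c.range := (MonoidHom.ofInjective ha).symm.trans (MonoidHom.ofInjective hc)
  have hφ (w : W) : (φ (MonoidHom.ofInjective ha w) : G) = c w := by
    simp only [φ, MulEquiv.trans_apply, MulEquiv.symm_apply_apply, MonoidHom.ofInjective_apply]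
  refine ⟨HNNExtension G a.range c.range φ, inferInstance, HNNExtension.of, HNNExtension.t,
    HNNExtension.of_injective φ, fun w => ?_, fun T hT => comap_of_map_sup_zpowers_t ?_⟩
  · rw [← hφ w, HNNExtension.equiv_eq_conj, MulAut.conj_apply, MonoidHom.ofInjective_apply]
  · rintro ⟨_, w, rfl⟩
    exact (SetLike.ext_iff.1 hT w).trans (by rw [Subgroup.mem_comap, ← hφ]; rfl)

/-! ### Wreath products -/

section Wreath

open SemidirectProduct Multiplicative
open scoped Pointwise

variable {B Γ B' Γ' : Type*} [Group Γ] [Group Γ'] (ρ : Γ →* Equiv.Perm B)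
  (ρ' : Γ' →* Equiv.Perm B')

/-- The action on the free abelian group with basis `B` induced by an action on `B`. -/
noncomputable def permAut : Γ →* MulAut (Multiplicative (B →₀ ℤ)) where
  toFun γ := AddEquiv.toMultiplicative (Finsupp.domCongr (ρ γ))
  map_one' := MulEquiv.ext fun _ => toAdd.injective <| Finsupp.ext fun _ => by
    rw [map_one]; rfl
  map_mul' _ _ := MulEquiv.ext fun _ => toAdd.injective <| Finsupp.ext fun _ => by
    rw [map_mul]; rfl

/-- The restricted wreath product of `ℤ` with a group `Γ` acting on `B`. -/
abbrev Wreath := Multiplicative (B →₀ ℤ) ⋊[permAut ρ] Γ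

/-- The element of the wreath product corresponding to a basis vector. -/
noncomputable def lamp (b : B) : Wreath ρ := inl (ofAdd (Finsupp.single b 1))

variable {ρ ρ'}

theorem conj_inr_lamp (γ : Γ) (b : B) : MulAut.conj (inr γ : Wreath ρ) (lamp ρ b) =
    lamp ρ (ρ γ b) := by
  rw [MulAut.conj_apply, lamp, ← map_inv, ← inl_aut]
  exact congrArg (fun l => inl (ofAdd l)) (Finsupp.equivMapDomain_single _ _ _)

section WreathMap

variable {f : B → B'} {h : Γ →* Γ'} (hfh : ∀ γ b, f (ρ γ b) = ρ' (h γ) (f b))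

/-- The homomorphism of wreath products induced by an equivariant map. -/
noncomputable def wreathMap : Wreath ρ →* Wreath ρ' :=
  SemidirectProduct.map (AddMonoidHom.toMultiplicative (Finsupp.mapDomain.addMonoidHom f)) h
    fun γ => MonoidHom.ext fun l => toAdd.injective <| by
      change Finsupp.mapDomain f (Finsupp.equivMapDomain (ρ γ) (toAdd l)) =
        Finsupp.equivMapDomain (ρ' (h γ)) (Finsupp.mapDomain f (toAdd l))
      rw [Finsupp.equivMapDomain_eq_mapDomain, Finsupp.equivMapDomain_eq_mapDomain,
        ← Finsupp.mapDomain_comp, ← Finsupp.mapDomain_comp]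
      exact congrArg (Finsupp.mapDomain · _) (funext (hfh γ))

theorem wreathMap_lamp (b : B) : wreathMap hfh (lamp ρ b) = lamp ρ' (f b) := by
  refine (SemidirectProduct.map_inl _ _ _ _).trans (congrArg inl ?_)
  exact congrArg ofAdd Finsupp.mapDomain_single

theorem wreathMap_inr (γ : Γ) : wreathMap hfh (inr γ) = inr (h γ) :=
  SemidirectProduct.map_inr _ _ _ _

theorem wreathMap_injective (hf : Function.Injective f) (hh : Function.Injective h) :
    Function.Injective (wreathMap hfh) := fun _ _ hw =>
  SemidirectProduct.ext
    (toAdd.injective <| Finsupp.mapDomain_injective hf <|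
      congrArg (fun w => toAdd w.left) hw)
    (hh (congrArg SemidirectProduct.right hw))

end WreathMap

theorem equivMapDomain_mem_supported_iff {e : Equiv.Perm B} {S : Set B}
    (he : e ∈ MulAction.stabilizer (Equiv.Perm B) S) (l : B →₀ ℤ) :
    Finsupp.equivMapDomain e l ∈ Finsupp.supported ℤ ℤ S ↔ l ∈ Finsupp.supported ℤ ℤ S := by
  rw [MulAction.mem_stabilizer_set] at he
  simp only [Finsupp.mem_supported', Finsupp.equivMapDomain_apply]
  refine ⟨fun h b hb => ?_, fun h b hb => h _ fun hb' => hb ?_⟩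
  · simpa using h (e b) (mt (he b).1 hb)
  · simpa using (he _).2 hb'

theorem mapDomain_mem_supported_iff {f : B → B'} (hf : Function.Injective f) {S : Set B'}
    (l : B →₀ ℤ) :
    Finsupp.mapDomain f l ∈ Finsupp.supported ℤ ℤ S ↔
      l ∈ Finsupp.supported ℤ ℤ (f ⁻¹' S) := by
  classical
  rw [Finsupp.mem_supported, Finsupp.mem_supported, Finsupp.mapDomain_support_of_injective hf,
    Finset.coe_image, Set.image_subset_iff]

variable {S : Set B} {U : Subgroup Γ}
  (hU : U ≤ (MulAction.stabilizer (Equiv.Perm B) S).comap ρ)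

/-- The subgroup of the wreath product of the elements supported in `S` whose component in `Γ`
belongs to `U`. -/
def supportedSubgroup : Subgroup (Wreath ρ) where
  carrier := {w | toAdd w.left ∈ Finsupp.supported ℤ ℤ S ∧ w.right ∈ U}
  one_mem' := ⟨zero_mem _, U.one_mem⟩
  mul_mem' := fun ⟨hl, hr⟩ ⟨hl', hr'⟩ =>
    ⟨add_mem hl ((equivMapDomain_mem_supported_iff (hU hr) _).2 hl'), U.mul_mem hr hr'⟩
  inv_mem' := fun ⟨hl, hr⟩ =>
    ⟨(equivMapDomain_mem_supported_iff (hU (U.inv_mem hr)) _).2 (neg_mem hl), U.inv_mem hr⟩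

theorem lamp_mem_supportedSubgroup {b : B} : lamp ρ b ∈ supportedSubgroup hU ↔ b ∈ S := by
  refine ⟨fun h => ?_, fun h => ⟨Finsupp.single_mem_supported ℤ 1 h, U.one_mem⟩⟩
  exact h.1 (by simp [lamp])

theorem inr_mem_supportedSubgroup {γ : Γ} (hγ : γ ∈ U) :
    (inr γ : Wreath ρ) ∈ supportedSubgroup hU :=
  ⟨zero_mem _, hγ⟩

end Wreath

/-! ### The model of the machine group -/

/-- The elements of the model: one for each phase of the machine, and those in the middle of a
step, namely `exec` with an even or odd code or data stack, and `exec` after it has removed a one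
from the code and pushed `n` of the bits of the program. -/
inductive Node
  | phase (s : Phase) | evenCode | oddCode | evenData | oddData | call (n : ℕ)

/-- Goodness of the configuration represented by a node. -/
def Node.Good (Z : List Bool) : Node → ℤ → ℤ → Prop
  | .phase s, a, g => IsoProblem.Good Z ⟨s, a, g⟩
  | .evenCode, a, g => IsoProblem.Good Z ⟨.exec, a, 2 * g⟩
  | .oddCode, a, g => IsoProblem.Good Z ⟨.exec, a, 2 * g + 1⟩
  | .evenData, a, g => IsoProblem.Good Z ⟨.exec, 2 * a, g⟩
  | .oddData, a, g => IsoProblem.Good Z ⟨.exec, 2 * a + 1, g⟩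
  | .call n, a, g => ∃ b h, a = 2 * b ∧ 2 ^ Z.length * g = 2 ^ n * (h - push Z 0) ∧
      IsoProblem.Good Z ⟨.skip, b, h⟩

/-- The conjugations prescribed in the model, by `p` for the first six and by `q` for the others. -/
inductive Edge
  | pScan | pExec | pOddData | pEvenData | pOddCode | pSkip
  | qScan | qSkip | qEvenCode | qOddData | qEvenData | qOddCode | qCall (n : ℕ)

/-- The source of an edge, and whether it is a conjugation by `q`. -/
def Edge.src : Edge → Node × Bool
  | .pScan => (.phase .scan, false)
  | .pExec => (.phase .exec, false)
  | .pOddData => (.oddData, false)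
  | .pEvenData => (.evenData, false)
  | .pOddCode => (.oddCode, false)
  | .pSkip => (.phase .skip, false)
  | .qScan => (.phase .scan, true)
  | .qSkip => (.phase .skip, true)
  | .qEvenCode => (.evenCode, true)
  | .qOddData => (.oddData, true)
  | .qEvenData => (.evenData, true)
  | .qOddCode => (.oddCode, true)
  | .qCall n => (.call n, true)

/-- The target of an edge: a node, and its offsets on the stack that is doubled and on the other
stack. -/
def Edge.tgt (Z : List Bool) : Edge → (Node × Bool) × ℤ × ℤ
  | .pScan => ((.phase .skip, false), 1, 0)
  | .pExec => ((.phase .skip, false), 0, 0)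
  | .pOddData => ((.phase .exec, false), 1, 0)
  | .pEvenData => ((.phase .exec, false), 0, 0)
  | .pOddCode => ((.call 0, false), 0, 0)
  | .pSkip => ((.call Z.length, false), 0, -push Z 0)
  | .qScan => ((.phase .scan, true), 0, 0)
  | .qSkip => ((.phase .scan, true), 1, 0)
  | .qEvenCode => ((.phase .exec, true), 0, 0)
  | .qOddData => ((.evenCode, true), 0, 0)
  | .qEvenData => ((.evenCode, true), 1, 0)
  | .qOddCode => ((.phase .exec, true), 1, 0)
  | .qCall n => ((.call (n + 1), true), 0, 0)

/-- The index set of the wreath product. The integers in `((j, false), a, g)` and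
`((j, true), g, a)` are the data stack `a` and the code stack `g` at the node `j`. -/
abbrev Vertex := (Node × Bool) × ℤ × ℤ

/-- The set of vertices at which the configuration is good. -/
def goodSet (Z : List Bool) : Set Vertex :=
  {b | if b.1.2 then b.1.1.Good Z b.2.2 b.2.1 else b.1.1.Good Z b.2.1 b.2.2}

/-- The vertex at which a translate of an edge starts. -/
def srcMap : Edge × ℤ × ℤ → Vertex := Prod.map Edge.src id

/-- The vertex at which a translate of an edge ends. -/
def tgtMap (Z : List Bool) (b : Edge × ℤ × ℤ) : Vertex :=
  ((b.1.tgt Z).1, 2 * b.2.1 + (b.1.tgt Z).2.1, b.2.2 + (b.1.tgt Z).2.2)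

theorem srcMap_injective : Function.Injective srcMap :=
  Function.Injective.prodMap
    (fun e e' h => by cases e <;> cases e' <;> simp_all [Edge.src]) Function.injective_id

theorem tgtMap_injective {Z : List Bool} (hZ : Z ≠ []) : Function.Injective (tgtMap Z) := by
  have hlen : Z.length ≠ 0 := by simpa using hZ
  rintro ⟨e, m, n⟩ ⟨e', m', n'⟩ h
  simp only [tgtMap, Prod.mk.injEq] at h
  obtain ⟨hnode, hdouble, hother⟩ := h
  obtain rfl : e = e' := by
    cases e <;> cases e' <;> simp [Edge.tgt, hZ] at hnode hdouble ⊢ <;> omega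
  simp only [Prod.mk.injEq, true_and]
  omega

theorem good_of_step_eq {Z : List Bool} {c d : Config} (h : step Z c = d) :
    Good Z c ↔ Good Z d := h ▸ good_step.symm

theorem step_exec_odd (Z : List Bool) (a g : ℤ) :
    step Z ⟨.exec, a, 2 * g + 1⟩ = ⟨.skip, a, 2 ^ Z.length * g + push Z 0⟩ := by
  rw [step, if_neg (by omega), if_neg (by omega), show (2 * g + 1) / 2 = g by omega, push_eq]

theorem Node.good_call {Z : List Bool} {n : ℕ} {a g h : ℤ}
    (hg : 2 ^ Z.length * g = 2 ^ n * (h - push Z 0)) :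
    (Node.call n).Good Z (2 * a) g ↔ IsoProblem.Good Z ⟨.skip, a, h⟩ := by
  refine ⟨?_, fun hgood => ⟨a, h, rfl, hg, hgood⟩⟩
  rintro ⟨b, h', hb, hh', hgood⟩
  obtain rfl : a = b := by omega
  have hsub := mul_left_cancel₀ (by positivity) (hg.symm.trans hh')
  rwa [show h = h' by omega]

theorem srcMap_mem_goodSet_iff (Z : List Bool) (b : Edge × ℤ × ℤ) :
    srcMap b ∈ goodSet Z ↔ tgtMap Z b ∈ goodSet Z := by
  obtain ⟨e, m, n⟩ := b
  cases e <;> simp only [srcMap, tgtMap, Prod.map, id, Edge.src, Edge.tgt, goodSet, Node.Good,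
    Set.mem_ofPred_eq, if_true, if_false, Bool.false_eq_true, add_zero]
  case pScan => exact (good_of_step_eq (by simp [step]; omega)).symm
  case pExec => exact (good_of_step_eq (by simp [step])).symm
  case pOddCode =>
    rw [good_of_step_eq (step_exec_odd Z m n)]
    exact (Node.good_call (by ring)).symm
  case pSkip => exact (Node.good_call (by ring)).symm
  case qScan => exact (good_of_step_eq (by simp [step])).symm
  case qSkip => exact (good_of_step_eq (by simp [step]; omega)).symm
  case qOddData =>
    refine (good_of_step_eq ?_).symm
    rw [step, if_pos (by omega), show 2 * (2 * m) / 4 = m by omega]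
  case qEvenData =>
    refine (good_of_step_eq ?_).symm
    rw [step, if_neg (by omega), if_pos (by omega), show 2 * (2 * m + 1) / 4 = m by omega]
  case qCall k =>
    refine exists_congr fun b => exists_congr fun h => and_congr_right' (and_congr_left' ?_)
    rw [pow_succ]
    constructor <;> intro h <;> linarith

section LettersInModel

open SemidirectProduct Multiplicative
open MulAut (conj)
open scoped Pointwise

instance : Nonempty Node := ⟨.evenCode⟩

/-- Translation of the two stacks. -/
def translate (α : Type*) : Multiplicative (ℤ × ℤ) →* Equiv.Perm (α × ℤ × ℤ) where
  toFun m := Equiv.prodCongr (Equiv.refl α) (Equiv.addRight (toAdd m))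
  map_one' := by ext <;> simp
  map_mul' m n := by ext <;> simp <;> ring

theorem translate_apply {α : Type*} (m : Multiplicative (ℤ × ℤ)) (b : α × ℤ × ℤ) :
    translate α m b = (b.1, b.2 + toAdd m) := rfl

theorem translate_injective {α : Type*} [Nonempty α] : Function.Injective (translate α) := by
  intro m n h
  obtain ⟨i⟩ := ‹Nonempty α›
  simpa [translate_apply] using congrArg (fun π => π (i, 0)) h

/-- The involution of the vertices that exchanges the two stacks. -/
def flip : Equiv.Perm Vertex :=
  Function.Involutive.toPerm (fun b => ((b.1.1, !b.1.2), b.2.2, b.2.1)) fun b => by simp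

theorem flip_apply (b : Vertex) : flip b = ((b.1.1, !b.1.2), b.2.2, b.2.1) := rfl

theorem flip_mul_flip : flip * flip = 1 := Equiv.ext fun b => by simp [flip_apply]

theorem conj_flip_translate (m n : ℤ) :
    conj flip (translate _ (ofAdd (m, n))) = translate _ (ofAdd (n, m)) := by
  rw [MulAut.conj_apply, inv_eq_of_mul_eq_one_right flip_mul_flip]
  exact Equiv.ext fun b => by simp [flip_apply, translate_apply, Prod.ext_iff]

/-- Doubling of one of the stacks. -/
def double : Multiplicative (ℤ × ℤ) →* Multiplicative (ℤ × ℤ) :=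
  AddMonoidHom.toMultiplicative ((AddMonoidHom.mulLeft 2).prodMap (AddMonoidHom.id ℤ))

theorem double_injective : Function.Injective double :=
  toAdd.injective.comp <| Function.Injective.prodMap (mul_right_injective₀ two_ne_zero)
    Function.injective_id

/-- The wreath product that contains all letters of the model except `p`. -/
abbrev VertexGroup := Wreath (MonoidHom.id (Equiv.Perm Vertex))

/-- The wreath product which has two embeddings in `VertexGroup` to be conjugated by `p`. -/
abbrev EdgeGroup := Wreath (translate Edge)

/-- The embedding given by the sources of the edges. -/
noncomputable def srcHom : EdgeGroup →* VertexGroup :=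
  wreathMap (f := srcMap) (h := translate _) fun _ _ => rfl

/-- The embedding given by the targets of the edges. -/
noncomputable def tgtHom (Z : List Bool) : EdgeGroup →* VertexGroup :=
  wreathMap (f := tgtMap Z) (h := (translate _).comp double) fun γ b => by
    ext <;> simp [tgtMap, translate_apply, double] <;> ring

theorem srcHom_lamp (b : Edge × ℤ × ℤ) : srcHom (lamp _ b) = lamp _ (srcMap b) :=
  wreathMap_lamp _ _

theorem tgtHom_lamp (Z : List Bool) (b : Edge × ℤ × ℤ) :
    tgtHom Z (lamp _ b) = lamp _ (tgtMap Z b) :=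
  wreathMap_lamp _ _

theorem srcHom_inr (m : Multiplicative (ℤ × ℤ)) : srcHom (inr m) = inr (translate _ m) :=
  wreathMap_inr _ _

theorem tgtHom_inr (Z : List Bool) (m : Multiplicative (ℤ × ℤ)) :
    tgtHom Z (inr m) = inr (translate _ (double m)) :=
  wreathMap_inr _ _

theorem srcHom_injective : Function.Injective srcHom :=
  wreathMap_injective _ srcMap_injective translate_injective

theorem tgtHom_injective {Z : List Bool} (hZ : Z ≠ []) : Function.Injective (tgtHom Z) :=
  wreathMap_injective _ (tgtMap_injective hZ) (translate_injective.comp double_injective)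

theorem zpowers_flip_le (Z : List Bool) : Subgroup.zpowers flip ≤
    (MulAction.stabilizer (Equiv.Perm Vertex) (goodSet Z)).comap (MonoidHom.id _) := by
  rw [Subgroup.zpowers_le, Subgroup.mem_comap, MulAction.mem_stabilizer_set]
  rintro ⟨⟨j, _ | _⟩, a, g⟩ <;> simp [flip_apply, goodSet]

theorem translate_mem_zpowers_flip {m : Multiplicative (ℤ × ℤ)} :
    translate _ m ∈ Subgroup.zpowers flip ↔ m = 1 := by
  refine ⟨fun h => ?_, fun h => h ▸ (map_one (translate _)).symm ▸ one_mem _⟩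
  have hle : Subgroup.zpowers flip ≤
      MulAction.stabilizer (Equiv.Perm Vertex) {b : Vertex | b.2 = 0} := by
    rw [Subgroup.zpowers_le, MulAction.mem_stabilizer_set]
    intro b
    simp [flip_apply, Prod.ext_iff, and_comm]
  have hmem := (MulAction.mem_stabilizer_set.1 (hle h) ((.evenCode, true), 0)).2 rfl
  simpa [translate_apply] using hmem

/-- The subgroup of the elements supported on vertices where the configuration is good. -/
def goodSubgroup (Z : List Bool) : Subgroup VertexGroup := supportedSubgroup (zpowers_flip_le Z)

theorem comap_srcHom_goodSubgroup {Z : List Bool} (hZ : Z ≠ []) :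
    (goodSubgroup Z).comap srcHom = (goodSubgroup Z).comap (tgtHom Z) := by
  ext w
  rw [Subgroup.mem_comap, Subgroup.mem_comap]
  refine and_congr ?_ ?_
  · change Finsupp.mapDomain _ _ ∈ _ ↔ Finsupp.mapDomain _ _ ∈ _
    rw [mapDomain_mem_supported_iff srcMap_injective,
      mapDomain_mem_supported_iff (tgtMap_injective hZ),
      show srcMap ⁻¹' goodSet Z = tgtMap Z ⁻¹' goodSet Z from
        Set.ext fun b => srcMap_mem_goodSet_iff Z b]
  · exact translate_mem_zpowers_flip.trans <| (map_eq_one_iff _ double_injective).symm.trans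
      translate_mem_zpowers_flip.symm

section ModelLetters

variable {M : Type*} [Group M] (o : VertexGroup →* M) (p : M)

/-- The element of the model corresponding to a vertex. -/
noncomputable def vertexElt (b : Vertex) : M := o (lamp _ b)

/-- The letters of the model. -/
noncomputable def modelLetters : Letters M where
  x := o (inr (translate _ (ofAdd (1, 0))))
  p := p
  v := o (inr flip)
  τ := vertexElt o ((.phase .exec, false), 0, 0)

variable {o}

theorem conj_vertexElt (π : Equiv.Perm Vertex) (b : Vertex) :
    conj (o (inr π)) (vertexElt o b) = vertexElt o (π b) :=
  (Letters.map_conj o _ _).symm.trans (congrArg o (conj_inr_lamp π b))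

theorem modelLetters_y : (modelLetters o p).y = o (inr (translate _ (ofAdd (0, 1)))) := by
  simp only [Letters.y, modelLetters]
  rw [← Letters.map_conj, ← Letters.map_conj, conj_flip_translate]

theorem translate_zpow (m n : ℤ × ℤ) (k : ℤ) (h : k • m = n) :
    (o (inr (translate _ (ofAdd m)))) ^ k = o (inr (translate _ (ofAdd n))) := by
  rw [← h, ofAdd_zsmul, map_zpow, map_zpow, map_zpow]

theorem modelLetters_conj_x_zpow (n : ℤ) (j : Node × Bool) (a g : ℤ) :
    conj ((modelLetters o p).x ^ n) (vertexElt o (j, a, g)) = vertexElt o (j, a + n, g) := by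
  rw [modelLetters, translate_zpow (1, 0) (n, 0) n (by simp), conj_vertexElt]
  simp [translate_apply]

theorem modelLetters_conj_y_zpow (n : ℤ) (j : Node × Bool) (a g : ℤ) :
    conj ((modelLetters o p).y ^ n) (vertexElt o (j, a, g)) = vertexElt o (j, a, g + n) := by
  rw [modelLetters_y, translate_zpow (0, 1) (0, n) n (by simp), conj_vertexElt]
  simp [translate_apply]

theorem modelLetters_conj_x (j : Node × Bool) (a g : ℤ) :
    conj (modelLetters o p).x (vertexElt o (j, a, g)) = vertexElt o (j, a + 1, g) := by
  simpa only [zpow_one] using modelLetters_conj_x_zpow p 1 j a g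

theorem modelLetters_conj_y (j : Node × Bool) (a g : ℤ) :
    conj (modelLetters o p).y (vertexElt o (j, a, g)) = vertexElt o (j, a, g + 1) := by
  simpa only [zpow_one] using modelLetters_conj_y_zpow p 1 j a g

theorem modelLetters_conj_v (j : Node) (i : Bool) (a g : ℤ) :
    conj (modelLetters o p).v (vertexElt o ((j, i), a, g)) = vertexElt o ((j, !i), g, a) :=
  conj_vertexElt _ _

theorem conj_inv_eq_of_conj_eq {b s s' : M} (h : conj b s = s') : conj b⁻¹ s' = s := by
  rw [← h, map_inv, MulAut.inv_apply_self]

variable {p} {Z : List Bool} (hp : ∀ w, conj p (o (srcHom w)) = o (tgtHom Z w))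
include hp

theorem modelLetters_conj_p (e : Edge) : conj (modelLetters o p).p (vertexElt o (e.src, 0, 0)) =
    vertexElt o (e.tgt Z) := by
  have h := hp (lamp _ (e, 0, 0))
  rw [srcHom_lamp, tgtHom_lamp] at h
  simp only [tgtMap, mul_zero, zero_add] at h
  exact h

theorem modelLetters_conj_q {e : Edge} {j j' : Node} {a g : ℤ} (hsrc : e.src = (j, true))
    (htgt : e.tgt Z = ((j', true), g, a)) :
    conj (modelLetters o p).q (vertexElt o ((j, false), 0, 0)) =
      vertexElt o ((j', false), a, g) := by
  have h := congrArg (conj (modelLetters o p).v) (modelLetters_conj_p hp e)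
  rwa [hsrc, htgt, Letters.conj_conj_distrib, modelLetters_conj_v, modelLetters_conj_v] at h

theorem modelLetters_conj_q_inv {e : Edge} {j j' : Node} {a g : ℤ} (hsrc : e.src = (j, true))
    (htgt : e.tgt Z = ((j', true), g, a)) :
    conj (modelLetters o p).q⁻¹ (vertexElt o ((j', false), a, g)) =
      vertexElt o ((j, false), 0, 0) :=
  conj_inv_eq_of_conj_eq (modelLetters_conj_q hp hsrc htgt)

theorem modelLetters_conj_q_pow (n : ℕ) :
    conj ((modelLetters o p).q ^ n) (vertexElt o ((.call 0, false), 0, 0)) =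
      vertexElt o ((.call n, false), 0, 0) := by
  induction n with
  | zero => simp
  | succ n ih =>
    rw [pow_succ', map_mul, MulAut.mul_apply, ih, modelLetters_conj_q hp (e := .qCall n) rfl rfl]

theorem modelLetters_tau (s : Phase) :
    (modelLetters o p).tau s = vertexElt o ((.phase s, false), 0, 0) := by
  have hskip := modelLetters_conj_p hp .pExec
  cases s with
  | exec => rfl
  | skip => exact hskip
  | scan =>
    refine (congrArg (fun s => conj _ (conj _ s)) hskip).trans ?_
    refine conj_inv_eq_of_conj_eq ((modelLetters_conj_p hp .pScan).trans ?_)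
    exact (modelLetters_conj_x p _ 0 0).symm

theorem modelLetters_config (c : Config) :
    (modelLetters o p).config c = vertexElt o ((.phase c.phase, false), c.data, c.code) := by
  rw [Letters.config, Letters.shift, modelLetters_tau hp, map_mul, MulAut.mul_apply,
    modelLetters_conj_y_zpow, modelLetters_conj_x_zpow, zero_add, zero_add]

theorem modelLetters_satisfies : (modelLetters o p).Satisfies Z where
  v_mul_v := by
    simp only [modelLetters, ← map_mul, flip_mul_flip, map_one]
  x_mul_y := by
    rw [modelLetters_y]
    simp only [modelLetters, ← map_mul, mul_comm]
  p_x := by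
    have h := hp (inr (ofAdd (1, 0)))
    rw [srcHom_inr, tgtHom_inr] at h
    rw [← zpow_two]
    exact h.trans (translate_zpow (1, 0) (2, 0) 2 (by simp)).symm
  p_y := by
    have h := hp (inr (ofAdd (0, 1)))
    rw [srcHom_inr, tgtHom_inr] at h
    rw [modelLetters_y]
    exact h
  scan_zero := by
    rw [modelLetters_tau hp]
    exact modelLetters_conj_q hp (e := .qScan) rfl rfl
  scan_one := by
    rw [modelLetters_tau hp, modelLetters_tau hp, modelLetters_conj_y]
    exact modelLetters_conj_q hp (e := .qSkip) rfl rfl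
  exec_zero_zero := by
    have hτ : (modelLetters o p).τ = vertexElt o ((.phase .exec, false), 0, 0) := rfl
    rw [hτ, modelLetters_conj_q_inv hp (e := .qEvenCode) rfl rfl,
      modelLetters_conj_q_inv hp (e := .qOddData) rfl rfl, modelLetters_conj_x, zero_add]
    exact (conj_inv_eq_of_conj_eq (modelLetters_conj_p hp .pOddData)).symm
  exec_zero_one := by
    have hτ : (modelLetters o p).τ = vertexElt o ((.phase .exec, false), 0, 0) := rfl
    rw [hτ, modelLetters_conj_q_inv hp (e := .qEvenCode) rfl rfl, modelLetters_conj_y, zero_add,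
      modelLetters_conj_q_inv hp (e := .qEvenData) rfl rfl]
    exact (conj_inv_eq_of_conj_eq (modelLetters_conj_p hp .pEvenData)).symm
  exec_one := by
    have hτ : (modelLetters o p).τ = vertexElt o ((.phase .exec, false), 0, 0) := rfl
    rw [modelLetters_tau hp, hτ, modelLetters_conj_y, zero_add,
      modelLetters_conj_q_inv hp (e := .qOddCode) rfl rfl]
    have hcall := modelLetters_conj_p hp .pOddCode
    have hskip := modelLetters_conj_p hp .pSkip
    simp only [Edge.src, Edge.tgt] at hcall hskip
    rw [hcall, hskip, modelLetters_conj_q_pow hp, modelLetters_conj_y_zpow, neg_add_cancel]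

end ModelLetters

theorem exists_letters_config_notMem {Z : List Bool} (hZ : Z ≠ []) {c : Config}
    (hc : ¬ Good Z c) :
    ∃ (M : Type) (_ : Group M) (L : Letters M) (K : Subgroup M), L.Satisfies Z ∧
      L.p ∈ K ∧ L.v ∈ K ∧ L.config target ∈ K ∧ L.config c ∉ K := by
  obtain ⟨M, _, o, p, -, hp, hcomap⟩ :=
    exists_conj_extension srcHom_injective (tgtHom_injective hZ)
  have hgood := hcomap (goodSubgroup Z) (comap_srcHom_goodSubgroup hZ)
  have hmem (c : Config) : (modelLetters o p).config c ∈
      (goodSubgroup Z).map o ⊔ Subgroup.zpowers p ↔ Good Z c := by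
    rw [modelLetters_config hp, vertexElt, ← Subgroup.mem_comap, hgood]
    exact lamp_mem_supportedSubgroup _
  refine ⟨M, _, modelLetters o p, _, modelLetters_satisfies hp,
    Subgroup.mem_sup_right (Subgroup.mem_zpowers p), Subgroup.mem_sup_left ?_,
    (hmem target).2 .refl, (hmem c).not.2 hc⟩
  exact Subgroup.mem_map_of_mem o
    (inr_mem_supportedSubgroup _ (Subgroup.mem_zpowers flip))

theorem exists_commute_iff_mem {M : Type*} [Group M] (K : Subgroup M) :
    ∃ (r : M →* Equiv.Perm ((M ⧸ K) × Bool)) (k : Equiv.Perm ((M ⧸ K) × Bool)),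
      ∀ m, Commute k (r m) ↔ m ∈ K := by
  classical
  let r : M →* Equiv.Perm ((M ⧸ K) × Bool) :=
    { toFun m := Equiv.prodCongr (MulAction.toPermHom M (M ⧸ K) m) (Equiv.refl _)
      map_one' := by ext b <;> simp
      map_mul' m n := by ext b <;> simp [mul_smul] }
  let e : M ⧸ K := (1 : M)
  have hr (m : M) (c : M ⧸ K) (b : Bool) : r m (c, b) = (m • c, b) := rfl
  have he (m : M) : m • e = e ↔ m ∈ K := by
    rw [← MulAction.mem_stabilizer_iff, MulAction.stabilizer_quotient]
  refine ⟨r, Equiv.swap (e, false) (e, true), fun m => ⟨fun h => ?_, fun hm => ?_⟩⟩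
  · by_contra hm
    have hne : m • e ≠ e := mt (he m).1 hm
    have hswap := DFunLike.congr_fun h.eq (e, false)
    rw [Equiv.Perm.mul_apply, Equiv.Perm.mul_apply, Equiv.swap_apply_left, hr, hr,
      Equiv.swap_apply_of_ne_of_ne (by simp [hne]) (by simp [hne])] at hswap
    simp at hswap
  · have hswap := Equiv.mul_swap_eq_swap_mul (r m) (e, false) (e, true)
    rw [hr, hr, (he m).2 hm] at hswap
    exact hswap.symm

end LettersInModel

/-! ### Groups with twelve relators on two generators -/

section WordRelators

open Multiplicative
open MulAut (conj)
open scoped commutatorElement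

/-- The action of `ℤ` on a free group of countable rank by shifts of the basis. -/
def shiftAut : Multiplicative ℤ →* MulAut (FreeGroup ℤ) where
  toFun n := FreeGroup.freeGroupCongr (Equiv.addRight (toAdd n))
  map_one' := by ext1 x; simp
  map_mul' m n := by
    refine MulEquiv.toMonoidHom_injective (FreeGroup.ext_hom _ _ fun x => ?_)
    simp [add_assoc, add_comm (toAdd m)]

theorem injective_lift_conj_pow (i : Bool) : Function.Injective (FreeGroup.lift fun n : ℕ =>
    conj (FreeGroup.of i ^ n) (FreeGroup.of !i)) := by
  let θ : FreeGroup Bool →* FreeGroup ℤ ⋊[shiftAut] Multiplicative ℤ := FreeGroup.lift fun j =>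
    if j = i then .inr (ofAdd 1) else .inl (FreeGroup.of 0)
  have hθ : θ.comp (FreeGroup.lift fun n : ℕ => conj (FreeGroup.of i ^ n) (FreeGroup.of !i)) =
      SemidirectProduct.inl.comp (FreeGroup.map ((↑) : ℕ → ℤ)) := by
    ext1 n
    rw [MonoidHom.comp_apply, FreeGroup.lift_apply_of, Letters.map_conj, map_pow θ]
    simp only [θ, MonoidHom.comp_apply, FreeGroup.lift_apply_of, if_true, Bool.not_eq_self,
      if_false, FreeGroup.map.of]
    rw [← map_pow, MulAut.conj_apply, ← map_inv, ← SemidirectProduct.inl_aut]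
    simp [shiftAut]
  refine Function.Injective.of_comp (f := θ) ?_
  rw [← MonoidHom.coe_comp, hθ]
  exact SemidirectProduct.inl_injective.comp (FreeGroup.map_injective Nat.cast_injective)

theorem injective_lift_of_comp {α G H : Type*} [Group G] [Group H] (f : G →* H) {u : α → G}
    (h : Function.Injective (FreeGroup.lift fun i => f (u i))) :
    Function.Injective (FreeGroup.lift u) := by
  refine Function.Injective.of_comp (f := f) ?_
  rw [← MonoidHom.coe_comp]
  convert h using 2
  ext1 i
  simp

/-- The words that encode the members of a sequence in a group by two generators. With `b` for
`conj (of false)⁻¹ (of true)`, they vanish if conjugation by `of false` takes the free basis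
`conj (of true ^ n) b` to the free basis `conj (b ^ n) (of true)`. -/
def codeWord (n : ℕ) : FreeGroup Bool :=
  conj (FreeGroup.of false) (conj (FreeGroup.of true ^ n)
      (conj (FreeGroup.of false)⁻¹ (FreeGroup.of true))) /
    conj (conj (FreeGroup.of false)⁻¹ (FreeGroup.of true) ^ n) (FreeGroup.of true)

theorem exists_codeWord_eq {Q : Type u} [Group Q] (g : ℕ → Q) (hg : g 0 = 1) :
    ∃ (M : Type u) (_ : Group M) (o : Q →* M) (θ : FreeGroup Bool →* M),
      Function.Injective o ∧ ∀ n, θ (codeWord n) = o (g n) := by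
  -- The Higman-Neumann-Neumann embedding: in `Q * F₂` multiply the second basis by the sequence.
  let a : Monoid.Coprod Q (FreeGroup Bool) := .inr (.of true)
  let b : Monoid.Coprod Q (FreeGroup Bool) := .inr (.of false)
  obtain ⟨M, _, o, s, ho, hs, -⟩ := exists_conj_extension
    (a := FreeGroup.lift fun n : ℕ => conj (a ^ n) b)
    (c := FreeGroup.lift fun n : ℕ => .inl (g n) * conj (b ^ n) a)
    (injective_lift_of_comp Monoid.Coprod.snd (by
      simpa [a, b, -map_pow, map_pow Monoid.Coprod.snd, MulAut.conj_apply] using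
        injective_lift_conj_pow true))
    (injective_lift_of_comp Monoid.Coprod.snd (by
      simpa [a, b, -map_pow, map_pow Monoid.Coprod.snd, MulAut.conj_apply] using
        injective_lift_conj_pow false))
  have hbasis (n : ℕ) :
      conj s (conj (o a ^ n) (o b)) = o (.inl (g n)) * conj (o b ^ n) (o a) := by
    have h := hs (.of n)
    simp only [FreeGroup.lift_apply_of] at h
    rwa [Letters.map_conj o, map_pow o, map_mul o, Letters.map_conj o, map_pow o] at h
  have hb : conj s⁻¹ (o a) = o b := conj_inv_eq_of_conj_eq (by simpa [hg] using hbasis 0)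
  let θ : FreeGroup Bool →* M := FreeGroup.lift fun i => bif i then o a else s
  have hθ_true : θ (.of true) = o a := FreeGroup.lift_apply_of
  have hθ_false : θ (.of false) = s := FreeGroup.lift_apply_of
  refine ⟨M, _, o.comp Monoid.Coprod.inl, θ, ho.comp Monoid.Coprod.inl_injective, fun n => ?_⟩
  rw [codeWord, map_div]
  simp only [Letters.map_conj θ, map_inv θ, map_pow θ, hθ_true, hθ_false]
  rw [hb, hbasis, mul_div_cancel_right, MonoidHom.comp_apply]

namespace Letters

variable {G H : Type*} [Group G] [Group H] {L : Letters G} {Z : List Bool} {k : G}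

/-- The relators of the machine group extended by a letter `k` that commutes with `p`, `v` and the
target configuration. -/
def relators (L : Letters G) (Z : List Bool) (k : G) : Fin 12 → G :=
  Fin.append (L.relator Z) ![⁅k, L.p⁆, ⁅k, L.v⁆, ⁅k, L.config target⁆]

theorem forall_relators_eq_one_iff : (∀ i, L.relators Z k i = 1) ↔
    L.Satisfies Z ∧ Commute k L.p ∧ Commute k L.v ∧ Commute k (L.config target) := by
  simp only [relators, satisfies_iff, ← commutatorElement_eq_one_iff_commute]
  refine (Fin.forall_fin_add (m := 9) (n := 3) _).trans ?_
  simp [Fin.forall_fin_succ]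

theorem map_relators (f : G →* H) (i : Fin 12) :
    (L.map f).relators Z (f k) i = f (L.relators Z k i) := by
  refine Fin.addCases (m := 9) (n := 3) (fun i => ?_) (fun i => ?_) i
  · simp only [relators, Fin.append_left, map_relator]
  · simp only [relators, Fin.append_right]
    fin_cases i <;> simp [map_commutatorElement, map_config]

theorem Satisfies.map (hL : L.Satisfies Z) (f : G →* H) : (L.map f).Satisfies Z :=
  satisfies_iff.2 fun i => by rw [map_relator, satisfies_iff.1 hL, map_one]

theorem commute_config_of_good (h : ∀ i, L.relators Z k i = 1) {c : Config} (hc : Good Z c) :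
    Commute k (L.config c) := by
  obtain ⟨hL, hp, hv, htarget⟩ := forall_relators_eq_one_iff.1 h
  have hmem {s : G} : s ∈ Subgroup.centralizer {k} ↔ Commute k s :=
    Subgroup.mem_centralizer_singleton_iff.trans eq_comm
  exact hmem.1 (hL.config_mem_of_good (hmem.2 hp) (hmem.2 hv) (hmem.2 htarget) hc)

end Letters

theorem exists_letters_not_commute_config {Z : List Bool} (hZ : Z ≠ []) {c : Config}
    (hc : ¬ Good Z c) :
    ∃ (Q : Type) (_ : Group Q) (L : Letters Q) (k : Q),
      (∀ i, L.relators Z k i = 1) ∧ ¬ Commute k (L.config c) := by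
  obtain ⟨M, _, L, K, hL, hp, hv, htarget, hconfig⟩ := exists_letters_config_notMem hZ hc
  obtain ⟨r, k, hk⟩ := exists_commute_iff_mem K
  refine ⟨_, _, L.map r, k, Letters.forall_relators_eq_one_iff.2 ⟨hL.map r, ?_, ?_, ?_⟩, ?_⟩
  · exact (hk _).2 hp
  · exact (hk _).2 hv
  · exact Letters.map_config L r _ ▸ (hk _).2 htarget
  · exact Letters.map_config L r _ ▸ (hk _).not.2 hconfig

/-- The letters of the machine group, encoded by two generators. -/
def wordLetters : Letters (FreeGroup Bool) := ⟨codeWord 1, codeWord 2, codeWord 3, codeWord 4⟩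

/-- The relators of the machine group, encoded by two generators. -/
def wordRelators (Z : List Bool) : Fin 12 → FreeGroup Bool :=
  wordLetters.relators Z (codeWord 5)

/-- The word that is trivial in the machine group if and only if the configuration is good. -/
def configWord (c : Config) : FreeGroup Bool := ⁅codeWord 5, wordLetters.config c⁆

theorem good_of_configWord_mem {Z : List Bool} (hZ : Z ≠ []) {c : Config}
    (h : configWord c ∈ Subgroup.normalClosure (Set.range (wordRelators Z))) : Good Z c := by
  by_contra hc
  obtain ⟨Q, _, L, k, hL, hk⟩ := exists_letters_not_commute_config hZ hc
  obtain ⟨M, _, o, θ, ho, hθ⟩ := exists_codeWord_eq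
    (fun | 1 => L.x | 2 => L.p | 3 => L.v | 4 => L.τ | 5 => k | _ => 1) rfl
  have hletters : wordLetters.map θ = L.map o := by
    simp only [Letters.map, wordLetters, hθ]
  have hle : Subgroup.normalClosure (Set.range (wordRelators Z)) ≤ θ.ker := by
    refine Subgroup.normalClosure_le_normal ?_
    rintro _ ⟨i, rfl⟩
    change θ (wordLetters.relators Z (codeWord 5) i) = 1
    rw [← Letters.map_relators, hletters, hθ]
    exact (Letters.map_relators o i).trans (hL i ▸ map_one o)
  have hword := hle h
  rw [MonoidHom.mem_ker, configWord, map_commutatorElement, ← Letters.map_config, hletters, hθ,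
    Letters.map_config, ← map_commutatorElement, map_eq_one_iff _ ho] at hword
  exact hk (commutatorElement_eq_one_iff_commute.1 hword)

theorem configWord_mem_of_good {Z : List Bool} {c : Config} (hc : Good Z c) :
    configWord c ∈ Subgroup.normalClosure (Set.range (wordRelators Z)) := by
  let f := QuotientGroup.mk' (Subgroup.normalClosure (Set.range (wordRelators Z)))
  have hrel (i : Fin 12) : (wordLetters.map f).relators Z (f (codeWord 5)) i = 1 := by
    rw [Letters.map_relators]
    exact (QuotientGroup.eq_one_iff _).2 (Subgroup.subset_normalClosure ⟨i, rfl⟩)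
  have hcommute := commutatorElement_eq_one_iff_commute.2 (Letters.commute_config_of_good hrel hc)
  rw [Letters.map_config, ← map_commutatorElement] at hcommute
  exact (QuotientGroup.eq_one_iff _).1 hcommute

theorem configWord_mem_iff {Z : List Bool} (hZ : Z ≠ []) {c : Config} :
    configWord c ∈ Subgroup.normalClosure (Set.range (wordRelators Z)) ↔ Good Z c :=
  ⟨good_of_configWord_mem hZ, configWord_mem_of_good⟩

end WordRelators

/-! ### Commuting elements of free groups -/

section CommuteFreeGroup

open MulAut (conj)

theorem commute_of_commute_zpow_left {G : Type*} [Group G] [IsMulTorsionFree G] {x y : G} {n : ℤ}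
    (hn : n ≠ 0) (h : Commute (x ^ n) y) : Commute x y := by
  refine (mul_inv_eq_iff_eq_mul.1 (zpow_left_injective hn ?_)).symm
  change (y * x * y⁻¹) ^ n = x ^ n
  rw [conj_zpow, mul_inv_eq_iff_eq_mul, h.eq]

theorem commute_sq_of_conj_eq_zpow {G : Type*} [Group G] [IsMulTorsionFree G] {e a : G} {m l : ℤ}
    (hm : conj e a = a ^ m) (hl : conj e⁻¹ a = a ^ l) : Commute (e ^ (2 : ℤ)) a := by
  rcases eq_or_ne a 1 with rfl | ha
  · exact Commute.one_right _
  have hml : a ^ (m * l) = a ^ (1 : ℤ) := by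
    rw [zpow_mul, ← hm, ← map_zpow, ← hl, map_inv, MulAut.apply_inv_self, zpow_one]
  have hmm : m * m = 1 := by
    have hml' := injective_zpow_iff_not_isOfFinOrder.2 (not_isOfFinOrder_of_isMulTorsionFree ha) hml
    rcases Int.eq_one_or_neg_one_of_mul_eq_one hml' with rfl | rfl <;> rfl
  have hconj : conj (e ^ (2 : ℤ)) a = a := by
    rw [zpow_two, map_mul, MulAut.mul_apply, hm, map_zpow, hm, ← zpow_mul, hmm, zpow_one]
  exact mul_inv_eq_iff_eq_mul.1 hconj

variable {α : Type*}

theorem eq_of_commute_of {i j : α} (h : Commute (FreeGroup.of i) (FreeGroup.of j)) : i = j := by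
  classical
  by_contra hij
  have hword := congrArg FreeGroup.toWord h.eq
  simp [FreeGroup.toWord_mul, FreeGroup.toWord_of, FreeGroup.reduce, hij] at hword

theorem isCyclic_freeGroup_of_commute (h : ∀ x y : FreeGroup α, Commute x y) :
    IsCyclic (FreeGroup α) := by
  rcases isEmpty_or_nonempty α with _ | ⟨⟨i⟩⟩
  · infer_instance
  · let : Unique α := ⟨⟨i⟩, fun j => eq_of_commute_of (h _ _)⟩
    infer_instance

theorem isCyclic_of_isMulCommutative (A : Subgroup (FreeGroup α)) [IsMulCommutative A] :
    IsCyclic A := by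
  let e := IsFreeGroup.toFreeGroup A
  have := isCyclic_freeGroup_of_commute fun x y => e.symm.injective <| by
    rw [map_mul, map_mul, mul_comm']
  exact isCyclic_of_surjective e.symm e.symm.surjective

theorem exists_zpow_eq_zpow_of_commute {x a : FreeGroup α} (ha : a ≠ 1) (h : Commute x a) :
    ∃ m n : ℤ, n ≠ 0 ∧ x ^ n = a ^ m := by
  have : IsMulCommutative (Subgroup.closure {x, a}) := Subgroup.isMulCommutative_closure <| by
    rintro _ (rfl | rfl) _ (rfl | rfl)
    exacts [rfl, h.eq, h.eq.symm, rfl]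
  obtain ⟨c, hc⟩ := (isCyclic_of_isMulCommutative (Subgroup.closure {x, a})).exists_generator
  obtain ⟨m, hm⟩ := hc ⟨x, Subgroup.subset_closure (by simp)⟩
  obtain ⟨n, hn⟩ := hc ⟨a, Subgroup.subset_closure (by simp)⟩
  refine ⟨m, n, ?_, ?_⟩
  · rintro rfl
    exact ha (congrArg Subtype.val hn).symm
  · have hx : (c : FreeGroup α) ^ m = x := congrArg Subtype.val hm
    have ha' : (c : FreeGroup α) ^ n = a := congrArg Subtype.val hn
    calc x ^ n = ((c : FreeGroup α) ^ m) ^ n := by rw [hx]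
      _ = ((c : FreeGroup α) ^ n) ^ m := zpow_comm _ _ _
      _ = a ^ m := by rw [ha']

theorem commute_trans {x a y : FreeGroup α} (ha : a ≠ 1) (hx : Commute x a) (hy : Commute a y) :
    Commute x y := by
  obtain ⟨m, n, hn, hzpow⟩ := exists_zpow_eq_zpow_of_commute ha hx
  exact commute_of_commute_zpow_left hn (hzpow ▸ hy.zpow_left m)

theorem eq_bot_of_normal_of_isMulCommutative [Nontrivial α] (A : Subgroup (FreeGroup α))
    [hA : A.Normal] [IsMulCommutative A] : A = ⊥ := by
  obtain ⟨c, hc⟩ := (isCyclic_of_isMulCommutative A).exists_generator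
  rw [Subgroup.eq_bot_iff_forall]
  by_contra! ⟨a, haA, ha⟩
  have hzpow (b : FreeGroup α) (hb : b ∈ A) : ∃ m : ℤ, b = (c : FreeGroup α) ^ m :=
    (hc ⟨b, hb⟩).imp fun m hm => (congrArg Subtype.val hm).symm
  have hc_ne : (c : FreeGroup α) ≠ 1 := by
    intro h
    obtain ⟨m, hm⟩ := hzpow a haA
    exact ha (by rw [hm, h, one_zpow])
  have hcommute (e : FreeGroup α) : Commute e c := by
    obtain ⟨m, hm⟩ := hzpow _ (hA.conj_mem c c.2 e)
    obtain ⟨l, hl⟩ := hzpow _ (hA.conj_mem c c.2 e⁻¹)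
    exact commute_of_commute_zpow_left two_ne_zero (commute_sq_of_conj_eq_zpow hm hl)
  obtain ⟨i, j, hij⟩ := exists_pair_ne α
  exact hij (eq_of_commute_of (commute_trans hc_ne (hcommute _) (hcommute _).symm))

end CommuteFreeGroup

/-! ### Semidirect products with free groups -/

section FreeByAbelian

open GLPrimcodable
open SemidirectProduct (inl inr inl_injective)

section SemidirectFreeGroup

theorem inl_apply_right {N F : Type*} [CommGroup N] [Group F] {ψ : F →* MulAut N}
    (s : N ⋊[ψ] F) (v : N) :
    inl (ψ s.right v) = s * inl v * s⁻¹ := by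
  ext <;> simp

variable {α V : Type*} [CommGroup V] {φ ψ : FreeGroup α →* MulAut V}

section Nontrivial

variable [Nontrivial α]

theorem right_map_inl (Ψ : (V ⋊[φ] FreeGroup α) ≃* (V ⋊[ψ] FreeGroup α)) (v : V) :
    (Ψ (inl v)).right = 1 := by
  let π : (V ⋊[φ] FreeGroup α) →* FreeGroup α :=
    SemidirectProduct.rightHom.comp Ψ.toMonoidHom
  have hπ : Function.Surjective π := SemidirectProduct.rightHom_surjective.comp Ψ.surjective
  have hnormal : (inl : V →* V ⋊[φ] FreeGroup α).range.Normal := by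
    rw [SemidirectProduct.range_inl_eq_ker_rightHom]
    infer_instance
  have hrange : (π.comp inl).range.Normal := by
    rw [← MonoidHom.map_range]
    exact hnormal.map π hπ
  have hbot : (π.comp inl).range = ⊥ := eq_bot_of_normal_of_isMulCommutative _
  exact (Subgroup.eq_bot_iff_forall _).1 hbot _ ⟨v, rfl⟩

theorem inl_left_map_inl (Ψ : (V ⋊[φ] FreeGroup α) ≃* (V ⋊[ψ] FreeGroup α)) (v : V) :
    inl (Ψ (inl v)).left = Ψ (inl v) :=
  SemidirectProduct.ext rfl (right_map_inl Ψ v).symm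

/-- The automorphism of `V` induced by an isomorphism `V ⋊ FreeGroup α ≃* V ⋊ FreeGroup α`, which
preserves `V` because the free group has no nontrivial commutative normal subgroup. -/
def restrictInl (Ψ : (V ⋊[φ] FreeGroup α) ≃* (V ⋊[ψ] FreeGroup α)) : MulAut V where
  toFun v := (Ψ (inl v)).left
  invFun v := (Ψ.symm (inl v)).left
  left_inv v := by
    simp only [inl_left_map_inl, MulEquiv.symm_apply_apply, SemidirectProduct.left_inl]
  right_inv v := by
    simp only [inl_left_map_inl, MulEquiv.apply_symm_apply, SemidirectProduct.left_inl]
  map_mul' v w := by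
    apply inl_injective (φ := ψ)
    rw [map_mul (inl (φ := ψ)), inl_left_map_inl, inl_left_map_inl, inl_left_map_inl, map_mul,
      map_mul]

theorem inl_restrictInl (Ψ : (V ⋊[φ] FreeGroup α) ≃* (V ⋊[ψ] FreeGroup α)) (v : V) :
    inl (restrictInl Ψ v) = Ψ (inl v) :=
  inl_left_map_inl Ψ v

theorem restrictInl_mul (Ψ : (V ⋊[φ] FreeGroup α) ≃* (V ⋊[ψ] FreeGroup α)) (u : FreeGroup α) :
    restrictInl Ψ * φ u = ψ (Ψ (inr u)).right * restrictInl Ψ := by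
  ext v
  apply inl_injective (φ := ψ)
  rw [MulAut.mul_apply, MulAut.mul_apply, inl_restrictInl, inl_apply_right, inl_restrictInl,
    SemidirectProduct.inl_aut, map_mul, map_mul, map_inv, map_inv]

end Nontrivial

variable {n : ℕ}

/-- The endomorphism of a free group multiplying the last generator by `z` and fixing the
others. -/
def mulLast (z : FreeGroup (Fin (n + 1))) : FreeGroup (Fin (n + 1)) →* FreeGroup (Fin (n + 1)) :=
  FreeGroup.lift (Fin.snoc (fun j => FreeGroup.of j.castSucc) (FreeGroup.of (Fin.last n) * z))

theorem mulLast_castSucc (z : FreeGroup (Fin (n + 1))) (j : Fin n) :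
    mulLast z (FreeGroup.of j.castSucc) = FreeGroup.of j.castSucc := by
  rw [mulLast, FreeGroup.lift_apply_of, Fin.snoc_castSucc]

theorem mulLast_last (z : FreeGroup (Fin (n + 1))) :
    mulLast z (FreeGroup.of (Fin.last n)) = FreeGroup.of (Fin.last n) * z := by
  rw [mulLast, FreeGroup.lift_apply_of, Fin.snoc_last]

theorem mulLast_map_castSucc (z : FreeGroup (Fin (n + 1))) (w : FreeGroup (Fin n)) :
    mulLast z (FreeGroup.map Fin.castSucc w) = FreeGroup.map Fin.castSucc w := by
  suffices (mulLast z).comp (FreeGroup.map Fin.castSucc) = FreeGroup.map Fin.castSucc from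
    DFunLike.congr_fun this w
  ext1 j
  rw [MonoidHom.comp_apply, FreeGroup.map.of, mulLast_castSucc]

theorem mulLast_comp_mulLast {z z' : FreeGroup (Fin (n + 1))} (h : mulLast z z' = z')
    (hz : z * z' = 1) : (mulLast z).comp (mulLast z') = MonoidHom.id _ := by
  ext1 i
  induction i using Fin.lastCases with
  | last => rw [MonoidHom.comp_apply, mulLast_last, map_mul, mulLast_last, h, mul_assoc, hz,
      mul_one, MonoidHom.id_apply]
  | cast j => rw [MonoidHom.comp_apply, mulLast_castSucc, mulLast_castSucc, MonoidHom.id_apply]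

/-- `mulLast` as an automorphism, for a factor not involving the last generator. -/
def mulLastEquiv (w : FreeGroup (Fin n)) : FreeGroup (Fin (n + 1)) ≃* FreeGroup (Fin (n + 1)) :=
  MonoidHom.toMulEquiv (mulLast (FreeGroup.map Fin.castSucc w))
    (mulLast (FreeGroup.map Fin.castSucc w⁻¹))
    (mulLast_comp_mulLast (mulLast_map_castSucc _ _) (by rw [← map_mul, inv_mul_cancel, map_one]))
    (mulLast_comp_mulLast (mulLast_map_castSucc _ _) (by rw [← map_mul, mul_inv_cancel, map_one]))

theorem lift_mulLastEquiv {G : Type*} [Group G] {f g : Fin (n + 1) → G}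
    (hfg : ∀ i : Fin n, f i.castSucc = g i.castSucc) (hf : f (Fin.last n) = 1)
    {w : FreeGroup (Fin n)} (hw : FreeGroup.lift (fun i => f i.castSucc) w = g (Fin.last n))
    (u : FreeGroup (Fin (n + 1))) :
    FreeGroup.lift f (mulLastEquiv w u) = FreeGroup.lift g u := by
  have hmap : (FreeGroup.lift f).comp (FreeGroup.map Fin.castSucc) =
      FreeGroup.lift fun i => f i.castSucc := by
    ext1 j
    rw [MonoidHom.comp_apply, FreeGroup.map.of, FreeGroup.lift_apply_of, FreeGroup.lift_apply_of]
  suffices (FreeGroup.lift f).comp (mulLast (FreeGroup.map Fin.castSucc w)) = FreeGroup.lift g from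
    DFunLike.congr_fun this u
  ext1 i
  induction i using Fin.lastCases with
  | last => rw [MonoidHom.comp_apply, mulLast_last, map_mul, FreeGroup.lift_apply_of, hf, one_mul,
      ← MonoidHom.comp_apply, hmap, hw, FreeGroup.lift_apply_of]
  | cast j => rw [MonoidHom.comp_apply, mulLast_castSucc, FreeGroup.lift_apply_of,
      FreeGroup.lift_apply_of, hfg]

theorem nonempty_semidirectProduct_lift_mulEquiv {N : Type*} [Group N]
    {f g : Fin (n + 1) → MulAut N} (hfg : ∀ i : Fin n, f i.castSucc = g i.castSucc)
    (hf : f (Fin.last n) = 1)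
    (hg : g (Fin.last n) ∈ (FreeGroup.lift fun i : Fin n => f i.castSucc).range) :
    Nonempty ((N ⋊[FreeGroup.lift f] FreeGroup (Fin (n + 1))) ≃*
      (N ⋊[FreeGroup.lift g] FreeGroup (Fin (n + 1)))) := by
  obtain ⟨w, hw⟩ := hg
  refine ⟨(SemidirectProduct.congr (MulEquiv.refl N) (mulLastEquiv w) fun u => ?_).symm⟩
  rw [lift_mulLastEquiv hfg hf hw]
  rfl

end SemidirectFreeGroup

section GeneralLinear

/-- `glAut` as an isomorphism onto the automorphism group of `ℤ⁴`. -/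
noncomputable def glAutEquiv :
    Matrix.GeneralLinearGroup (Fin 4) ℤ ≃* MulAut (Multiplicative (Fin 4 → ℤ)) where
  toFun := glAut
  invFun θ := Matrix.GeneralLinearGroup.toLin.symm <|
    (LinearMap.GeneralLinearGroup.generalLinearEquiv ℤ (Fin 4 → ℤ)).symm
      (AddEquiv.toMultiplicative.symm θ).toIntLinearEquiv
  left_inv g := by
    rw [MulEquiv.symm_apply_eq, MulEquiv.symm_apply_eq]
    rfl
  right_inv θ := by
    rw [glAut, MulEquiv.apply_symm_apply, MulEquiv.apply_symm_apply]
    rfl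
  map_mul' a b := by
    simp only [glAut, map_mul]
    rfl

variable {f g : Fin 15 → Matrix.GeneralLinearGroup (Fin 4) ℤ}

theorem phiOf_apply (f : Fin 15 → Matrix.GeneralLinearGroup (Fin 4) ℤ) (u : FreeGroup (Fin 15)) :
    phiOf f u = glAutEquiv (FreeGroup.lift f u) := by
  suffices phiOf f = glAutEquiv.toMonoidHom.comp (FreeGroup.lift f) from DFunLike.congr_fun this u
  ext1 i
  rw [phiOf, MonoidHom.comp_apply, FreeGroup.lift_apply_of, FreeGroup.lift_apply_of]
  rfl

theorem exists_conj_mem_range_lift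
    (Ψ : (Multiplicative (Fin 4 → ℤ) ⋊[phiOf f] FreeGroup (Fin 15)) ≃*
      (Multiplicative (Fin 4 → ℤ) ⋊[phiOf g] FreeGroup (Fin 15))) :
    ∃ R, ∀ h ∈ (FreeGroup.lift f).range, MulAut.conj R h ∈ (FreeGroup.lift g).range := by
  refine ⟨glAutEquiv.symm (restrictInl Ψ), ?_⟩
  rintro _ ⟨u, rfl⟩
  refine ⟨(Ψ (inr u)).right, glAutEquiv.injective ?_⟩
  rw [MulAut.conj_apply, map_mul, map_mul, map_inv, MulEquiv.apply_symm_apply, ← phiOf_apply,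
    ← phiOf_apply, restrictInl_mul, mul_inv_cancel_right]

theorem nonempty_semidirectProduct_phiOf_mulEquiv
    (hfg : ∀ i : Fin 14, f i.castSucc = g i.castSucc) (hf : f (Fin.last 14) = 1)
    (hg : g (Fin.last 14) ∈ (FreeGroup.lift fun i : Fin 14 => f i.castSucc).range) :
    Nonempty ((Multiplicative (Fin 4 → ℤ) ⋊[phiOf f] FreeGroup (Fin 15)) ≃*
      (Multiplicative (Fin 4 → ℤ) ⋊[phiOf g] FreeGroup (Fin 15))) := by
  obtain ⟨w, hw⟩ := hg
  refine nonempty_semidirectProduct_lift_mulEquiv (fun i => by rw [hfg]) ?_ ⟨w, ?_⟩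
  · rw [hf]
    exact map_one glAutEquiv
  · rw [← hw]
    change _ = glAutEquiv.toMonoidHom.comp (FreeGroup.lift _) w
    congr 1
    ext1 j
    rw [MonoidHom.comp_apply, FreeGroup.lift_apply_of, FreeGroup.lift_apply_of]
    rfl

end GeneralLinear

end FreeByAbelian

/-! ### Sanov's free subgroup of `SL(2, ℤ)` -/

section Sanov

open scoped MatrixGroups Pointwise
open ModularGroup (S T)

theorem injective_lift_of_zpow_ping_pong {ι G X : Type*} [Nontrivial ι] [Group G] [MulAction G X]
    (a : ι → G) (U : ι → Set X) (hne : ∀ i, (U i).Nonempty)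
    (hdisj : Pairwise (Function.onFun Disjoint U))
    (hpp : ∀ i j, i ≠ j → ∀ n : ℤ, n ≠ 0 → a i ^ n • U j ⊆ U i) :
    Function.Injective (FreeGroup.lift a) := by
  have hlift : FreeGroup.lift a =
      (Monoid.CoprodI.lift fun i => FreeGroup.lift fun _ : Unit => a i).comp
        (@freeGroupEquivCoprodI ι).toMonoidHom := by
    ext1 i
    simp
  rw [hlift, MonoidHom.coe_comp]
  refine .comp ?_ freeGroupEquivCoprodI.injective
  refine Monoid.CoprodI.lift_injective_of_ping_pong _ (.inr ?_) U hne hdisj fun i j hij => ?_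
  · refine ⟨Classical.arbitrary ι, ?_⟩
    rw [FreeGroup.freeGroupUnitEquivInt.cardinal_eq, Cardinal.mk_denumerable]
    exact Cardinal.natCast_le_aleph0
  · refine FreeGroup.freeGroupUnitEquivInt.forall_congr_left.2 fun n hn => ?_
    change FreeGroup.lift (fun _ => a i) (FreeGroup.of () ^ n) • U j ⊆ U i
    rw [map_zpow, FreeGroup.lift_apply_of]
    refine hpp i j hij n ?_
    rintro rfl
    exact hn (zpow_zero _)

theorem abs_lt_abs_add_two_mul_mul {a b n : ℤ} (hn : n ≠ 0) (h : |a| < |b|) :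
    |b| < |a + 2 * n * b| := by
  have hmul : 2 * |b| ≤ |2 * n * b| := by
    rw [abs_mul, abs_mul, abs_two]
    have := Int.one_le_abs hn
    gcongr
    lia
  have htri : |2 * n * b| ≤ |a + 2 * n * b| + |a| := by
    simpa only [add_sub_cancel_left] using abs_sub (a + 2 * n * b) a
  lia

/-- Sanov's generators `(1 2; 0 1)` and `(1 0; 2 1)`. -/
def sanovGen : Bool → SL(2, ℤ)
  | true => T ^ (2 : ℤ)
  | false => S * T ^ (-2 : ℤ) * S⁻¹

/-- Sanov's embedding of the free group on two generators into `SL(2, ℤ)`. -/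
def sanovHom : FreeGroup Bool →* SL(2, ℤ) := FreeGroup.lift sanovGen

theorem coe_sanovGen_true_zpow (n : ℤ) : (sanovGen true ^ n).1 = !![1, 2 * n; 0, 1] := by
  rw [sanovGen, ← zpow_mul, ModularGroup.coe_T_zpow]

theorem coe_sanovGen_false_zpow (n : ℤ) : (sanovGen false ^ n).1 = !![1, 0; 2 * n, 1] := by
  rw [sanovGen, conj_zpow, ← zpow_mul, Matrix.SpecialLinearGroup.coe_mul,
    Matrix.SpecialLinearGroup.coe_mul, ModularGroup.coe_T_zpow,
    Matrix.SpecialLinearGroup.coe_inv, ModularGroup.coe_S, Matrix.adjugate_fin_two_of]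
  simp

theorem injective_sanovHom : Function.Injective sanovHom := by
  let U : Bool → Set (Fin 2 → ℤ)
    | true => {v | |v 1| < |v 0|}
    | false => {v | |v 0| < |v 1|}
  have hdisj : Disjoint (U true) (U false) := Set.disjoint_left.2 fun v h h' =>
    lt_asymm (show |v 1| < |v 0| from h) h'
  refine injective_lift_of_zpow_ping_pong sanovGen U ?_ ?_ ?_
  · rintro (_ | _)
    exacts [⟨![0, 1], by simp [U]⟩, ⟨![1, 0], by simp [U]⟩]
  · rintro (_ | _) (_ | _) hij
    exacts [(hij rfl).elim, hdisj.symm, hdisj, (hij rfl).elim]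
  · rintro (_ | _) (_ | _) hij n hn
    · exact (hij rfl).elim
    · rintro _ ⟨v, hv, rfl⟩
      have hlt : |v 0| < |v 1 + 2 * n * v 0| := abs_lt_abs_add_two_mul_mul hn hv
      change |((sanovGen false ^ n).1.mulVec v) 0| < |((sanovGen false ^ n).1.mulVec v) 1|
      rw [coe_sanovGen_false_zpow]
      simpa [Matrix.mulVec, dotProduct, Fin.sum_univ_two, add_comm] using hlt
    · rintro _ ⟨v, hv, rfl⟩
      have hlt : |v 1| < |v 0 + 2 * n * v 1| := abs_lt_abs_add_two_mul_mul hn hv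
      change |((sanovGen true ^ n).1.mulVec v) 1| < |((sanovGen true ^ n).1.mulVec v) 0|
      rw [coe_sanovGen_true_zpow]
      simpa [Matrix.mulVec, dotProduct, Fin.sum_univ_two] using hlt
    · exact (hij rfl).elim

/-- The congruences characterising the image of `sanovHom`. -/
structure IsSanov (A : SL(2, ℤ)) : Prop where
  modEq_zero_zero : A 0 0 % 4 = 1
  modEq_one_one : A 1 1 % 4 = 1
  even_zero_one : Even (A 0 1)
  even_one_zero : Even (A 1 0)

theorem coe_sanovGen_true_zpow_mul (k : ℤ) (A : SL(2, ℤ)) : (sanovGen true ^ k * A).1 =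
    !![A 0 0 + 2 * k * A 1 0, A 0 1 + 2 * k * A 1 1; A 1 0, A 1 1] := by
  rw [Matrix.SpecialLinearGroup.coe_mul, coe_sanovGen_true_zpow]
  ext i j
  fin_cases i <;> fin_cases j <;> simp [Matrix.mul_apply, Fin.sum_univ_two]

theorem coe_sanovGen_false_zpow_mul (k : ℤ) (A : SL(2, ℤ)) : (sanovGen false ^ k * A).1 =
    !![A 0 0, A 0 1; A 1 0 + 2 * k * A 0 0, A 1 1 + 2 * k * A 0 1] := by
  rw [Matrix.SpecialLinearGroup.coe_mul, coe_sanovGen_false_zpow]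
  ext i j
  fin_cases i <;> fin_cases j <;> simp [Matrix.mul_apply, Fin.sum_univ_two, add_comm]

theorem IsSanov.zpow_mul {A : SL(2, ℤ)} (hA : IsSanov A) (b : Bool) (k : ℤ) :
    IsSanov (sanovGen b ^ k * A) := by
  obtain ⟨h₀₀, h₁₁, ⟨b', h₀₁⟩, ⟨c', h₁₀⟩⟩ := hA
  have hb : 2 * k * A 0 1 = 4 * (k * b') := by rw [h₀₁]; ring
  have hc : 2 * k * A 1 0 = 4 * (k * c') := by rw [h₁₀]; ring
  cases b
  · constructor <;> simp only [coe_sanovGen_false_zpow_mul, Matrix.of_apply, Matrix.cons_val]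
    · exact h₀₀
    · rw [hb]; lia
    · exact ⟨b', h₀₁⟩
    · exact ⟨c' + k * A 0 0, by rw [h₁₀]; ring⟩
  · constructor <;> simp only [coe_sanovGen_true_zpow_mul, Matrix.of_apply, Matrix.cons_val]
    · rw [hc]; lia
    · exact h₁₁
    · exact ⟨b' + k * A 1 1, by rw [h₀₁]; ring⟩
    · exact ⟨c', h₁₀⟩

theorem IsSanov.eq_zpow_of_eq_zero {A : SL(2, ℤ)} (hA : IsSanov A) (hc : A 1 0 = 0) :
    A = sanovGen true ^ (A 0 1 / 2) := by
  have hdet := A.det_coe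
  rw [Matrix.det_fin_two, hc, mul_zero, sub_zero] at hdet
  have ha : A 0 0 = 1 := by
    have := hA.modEq_zero_zero
    rcases Int.eq_one_or_neg_one_of_mul_eq_one hdet with h | h <;> lia
  rw [ha, one_mul] at hdet
  apply Subtype.ext
  rw [coe_sanovGen_true_zpow, Int.mul_ediv_cancel' hA.even_zero_one.two_dvd]
  exact (Matrix.eta_fin_two A.1).trans (by rw [ha, hc, hdet])

/-- The size of the first column, which decreases in the reduction of a matrix to the identity. -/
def colSize (A : SL(2, ℤ)) : ℕ := (A 0 0).natAbs + (A 1 0).natAbs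

theorem IsSanov.exists_colSize_lt {A : SL(2, ℤ)} (hA : IsSanov A) (hc : A 1 0 ≠ 0) :
    ∃ (b : Bool) (k : ℤ), colSize (sanovGen b ^ k * A) < colSize A := by
  have htrue (k : ℤ) : colSize (sanovGen true ^ k * A) =
      (A 0 0 + 2 * k * A 1 0).natAbs + (A 1 0).natAbs := by
    rw [colSize, coe_sanovGen_true_zpow_mul]
    rfl
  have hfalse (k : ℤ) : colSize (sanovGen false ^ k * A) =
      (A 0 0).natAbs + (A 1 0 + 2 * k * A 0 0).natAbs := by
    rw [colSize, coe_sanovGen_false_zpow_mul]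
    rfl
  by_contra! hmin
  have h₁ := hmin true 1
  have h₂ := hmin true (-1)
  have h₃ := hmin false 1
  have h₄ := hmin false (-1)
  rw [htrue] at h₁ h₂
  rw [hfalse] at h₃ h₄
  obtain ⟨h₀₀, -, -, ⟨c', h₁₀⟩⟩ := hA
  unfold colSize at h₁ h₂ h₃ h₄
  lia

theorem IsSanov.mem_range {A : SL(2, ℤ)} (hA : IsSanov A) : A ∈ sanovHom.range := by
  have hgen (b : Bool) : sanovGen b ∈ sanovHom.range :=
    ⟨FreeGroup.of b, FreeGroup.lift_apply_of⟩
  induction hn : colSize A using Nat.strong_induction_on generalizing A with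
  | _ n ih =>
    by_cases hc : A 1 0 = 0
    · rw [hA.eq_zpow_of_eq_zero hc]
      exact zpow_mem (hgen true) _
    · obtain ⟨b, k, hlt⟩ := hA.exists_colSize_lt hc
      exact (Subgroup.mul_mem_cancel_left _ (zpow_mem (hgen b) k)).1
        (ih _ (hn ▸ hlt) (hA.zpow_mul b k) rfl)

theorem IsSanov.of_mem_Gamma {A : SL(2, ℤ)} (hA : A ∈ CongruenceSubgroup.Gamma 4) :
    IsSanov A := by
  obtain ⟨h₀₀, h₀₁, h₁₀, h₁₁⟩ := CongruenceSubgroup.Gamma_mem.1 hA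
  have hmod {a b : ℤ} (h : (a : ZMod 4) = (b : ℤ)) : a % 4 = b % 4 :=
    (ZMod.intCast_eq_intCast_iff' a b 4).1 h
  have := hmod (h₀₁.trans Int.cast_zero.symm)
  have := hmod (h₁₀.trans Int.cast_zero.symm)
  exact ⟨hmod (h₀₀.trans Int.cast_one.symm), hmod (h₁₁.trans Int.cast_one.symm),
    Int.even_iff.2 (by lia), Int.even_iff.2 (by lia)⟩

theorem exists_pow_mem_range_sanovHom : ∃ m : ℕ, m ≠ 0 ∧ ∀ A : GL (Fin 2) ℤ,
    A ^ m ∈ (Matrix.SpecialLinearGroup.toGL.comp sanovHom).range := by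
  refine ⟨2 * (CongruenceSubgroup.Gamma 4).index,
    mul_ne_zero two_ne_zero Subgroup.FiniteIndex.index_ne_zero, fun A => ?_⟩
  have hdet : (A ^ 2).1.det = 1 := by
    rw [Units.val_pow_eq_pow_val, Matrix.det_pow,
      Int.isUnit_sq ((Matrix.isUnit_iff_isUnit_det _).1 A.isUnit)]
  obtain ⟨B, hB⟩ : ∃ B : SL(2, ℤ), Matrix.SpecialLinearGroup.toGL B = A ^ 2 :=
    ⟨⟨(A ^ 2).1, hdet⟩, Units.ext rfl⟩
  have hnormal : (CongruenceSubgroup.Gamma 4).Normal := CongruenceSubgroup.Gamma_normal 4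
  obtain ⟨u, hu⟩ := (IsSanov.of_mem_Gamma
    ((CongruenceSubgroup.Gamma 4).pow_index_mem B)).mem_range
  exact ⟨u, by rw [MonoidHom.comp_apply, hu, map_pow, hB, pow_mul]⟩

end Sanov

/-! ### Conjugation of block diagonal matrices -/

section BlockMatrices

open MulAut (conj)
open Matrix GLPrimcodable
open scoped MatrixGroups

theorem eq_zero_of_semiconjBy {R : Type*} [Ring R] {a x y : R} (h : SemiconjBy a x y)
    (hx : IsRightRegular (x - 1)) (hy : IsNilpotent (y - 1)) : a = 0 := by
  obtain ⟨d, hd⟩ := hy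
  refine (hx.pow d).mul_right_eq_zero_iff.1 ?_
  rw [((h.sub_right (.one_right a)).pow_right d).eq, hd, zero_mul]

section BlockDiagonal

variable {m n R : Type*} [Fintype m] [DecidableEq m] [Fintype n] [DecidableEq n] [CommRing R]

theorem isNilpotent_sub_one {A : Matrix (Fin 2) (Fin 2) R} (hA : A.det = 1)
    (h : (A - 1).det = 0) : IsNilpotent (A - 1) := by
  nontriviality R
  have htrace : (A - 1).trace = 0 := by
    simp only [det_fin_two, Matrix.sub_apply, one_apply_eq, ne_eq, zero_ne_one, not_false_eq_true,
      one_apply_ne, sub_zero, one_ne_zero, trace_fin_two] at hA h ⊢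
    linear_combination hA - h
  have hcharpoly := aeval_self_charpoly (A - 1)
  rw [charpoly_fin_two, htrace, h] at hcharpoly
  exact ⟨2, by simpa using hcharpoly⟩

theorem eq_zero_or_eq_zero_of_semiconjBy [IsDomain R] {P Q N A : Matrix (Fin 2) (Fin 2) R}
    (hP : A * P = P) (hQ : SemiconjBy Q N A) (hN : (N - 1).det ≠ 0) (hA : A.det = 1) :
    P = 0 ∨ Q = 0 := by
  have regular_of_det_ne_zero {B : Matrix (Fin 2) (Fin 2) R} (hB : B.det ≠ 0) : IsRegular B :=
    isRegular_of_isLeftRegular_det (IsRegular.of_ne_zero hB).left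
  by_cases h : (A - 1).det = 0
  · exact .inr (eq_zero_of_semiconjBy hQ (regular_of_det_ne_zero hN).right
      (isNilpotent_sub_one hA h))
  · refine .inl ((regular_of_det_ne_zero h).left.mul_left_eq_zero_iff.1 ?_)
    rw [sub_mul, one_mul, hP, sub_self]

/-- Block diagonal matrices with two invertible blocks. -/
def blockDiagHom : GL m R × GL n R →* GL (m ⊕ n) R :=
  (Units.map
    { toFun A := fromBlocks A.1 0 0 A.2
      map_one' := fromBlocks_one
      map_mul' A B := by simp [fromBlocks_multiply] }).comp MulEquiv.prodUnits.symm.toMonoidHom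

theorem coe_blockDiagHom (A : GL m R × GL n R) :
    (blockDiagHom A).1 = fromBlocks A.1.1 0 0 A.2.1 := rfl

theorem injective_blockDiagHom :
    Function.Injective (blockDiagHom : GL m R × GL n R →* GL (m ⊕ n) R) := by
  rintro ⟨A, B⟩ ⟨C, D⟩ h
  have hblocks := congrArg Units.val h
  rw [coe_blockDiagHom, coe_blockDiagHom, fromBlocks_inj] at hblocks
  exact Prod.ext (Units.ext hblocks.1) (Units.ext hblocks.2.2.2)

theorem mem_range_blockDiagHom {X : GL (m ⊕ n) R} {A : Matrix m m R} {D : Matrix n n R}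
    (hX : X.1 = fromBlocks A 0 0 D) : X ∈ (blockDiagHom (m := m) (n := n) (R := R)).range := by
  obtain ⟨⟨A, rfl⟩, ⟨D, rfl⟩⟩ := isUnit_fromBlocks_zero₁₂.1 (hX ▸ X.isUnit)
  exact ⟨(A, D), Units.ext hX.symm⟩

theorem sq_mem_range_blockDiagHom [IsDomain R] {X : GL (Fin 2 ⊕ Fin 2) R} {N A B : GL (Fin 2) R}
    (hX : conj X (blockDiagHom (1, N)) = blockDiagHom (A, B)) (hN : (N.1 - 1).det ≠ 0)
    (hA : A.1.det = 1) (hB : B.1.det = 1) :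
    X ^ 2 ∈ (blockDiagHom (m := Fin 2) (n := Fin 2) (R := R)).range := by
  -- A factor of `diag(A, B)` that is not unipotent has no common eigenvalue with `1`, and a
  -- unipotent one none with `N`, so in each row of blocks of `X` one block vanishes.
  have hblocks := congrArg Units.val (mul_inv_eq_iff_eq_mul.1 hX)
  obtain ⟨P, Q, U, V, hPQUV⟩ : ∃ P Q U V : Matrix (Fin 2) (Fin 2) R, X.1 = fromBlocks P Q U V :=
    ⟨_, _, _, _, (fromBlocks_toBlocks X.1).symm⟩
  rw [Units.val_mul, Units.val_mul, coe_blockDiagHom, coe_blockDiagHom, hPQUV,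
    fromBlocks_multiply, fromBlocks_multiply, fromBlocks_inj] at hblocks
  simp only [Units.val_one, mul_one, mul_zero, zero_mul, add_zero, zero_add] at hblocks
  obtain ⟨hP, hQ, hU, hV⟩ := hblocks
  have hdet : X.1.det ≠ 0 := ((isUnit_iff_isUnit_det _).1 X.isUnit).ne_zero
  rw [hPQUV] at hdet
  rcases eq_zero_or_eq_zero_of_semiconjBy hP.symm hQ hN hA with rfl | rfl <;>
    rcases eq_zero_or_eq_zero_of_semiconjBy hU.symm hV hN hB with rfl | rfl
  · simp [det_fromBlocks_zero₂₁] at hdet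
  · refine mem_range_blockDiagHom (A := Q * U) (D := U * Q) ?_
    rw [Units.val_pow_eq_pow_val, hPQUV, pow_two, fromBlocks_multiply]
    simp
  · refine mem_range_blockDiagHom (A := P * P) (D := V * V) ?_
    rw [Units.val_pow_eq_pow_val, hPQUV, pow_two, fromBlocks_multiply]
    simp
  · simp [det_fromBlocks_zero₁₂] at hdet

end BlockDiagonal

/-! ### Fibre products -/

section FibreProduct

variable {F G : Type*} [Group F] [Group G]

/-- The pairs of elements of `F` that agree modulo a normal subgroup. -/
def fibreProduct (N : Subgroup F) [N.Normal] : Subgroup (F × F) :=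
  ((QuotientGroup.mk' N).comp (.fst F F)).eqLocus ((QuotientGroup.mk' N).comp (.snd F F))

theorem mem_fibreProduct {N : Subgroup F} [N.Normal] {p : F × F} :
    p ∈ fibreProduct N ↔ p.1⁻¹ * p.2 ∈ N := QuotientGroup.eq

theorem one_mk_mem_fibreProduct {N : Subgroup F} [N.Normal] {w : F} :
    (1, w) ∈ fibreProduct N ↔ w ∈ N := by
  rw [mem_fibreProduct, inv_one, one_mul]

theorem closure_eq_fibreProduct {S R : Set F} (hS : Subgroup.closure S = ⊤) :
    Subgroup.closure ((fun s => (s, s)) '' S ∪ (fun r => (1, r)) '' R) =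
      fibreProduct (Subgroup.normalClosure R) := by
  set K := Subgroup.closure ((fun s => (s, s)) '' S ∪ (fun r => (1, r)) '' R)
  have hdiag (u : F) : (u, u) ∈ K := by
    have hle : Subgroup.closure S ≤ K.comap ((MonoidHom.id F).prod (.id F)) :=
      (Subgroup.closure_le _).2 fun s hs => Subgroup.subset_closure (.inl ⟨s, hs, rfl⟩)
    exact hle (hS ▸ Subgroup.mem_top u)
  have hnormal : (K.comap (.inr F F)).Normal := ⟨fun a ha u => by
    simpa using mul_mem (mul_mem (hdiag u) ha) (inv_mem (hdiag u))⟩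
  have hle : Subgroup.normalClosure R ≤ K.comap (.inr F F) :=
    Subgroup.normalClosure_le_normal fun r hr => Subgroup.subset_closure (.inr ⟨r, hr, rfl⟩)
  apply le_antisymm
  · refine (Subgroup.closure_le _).2 ?_
    rintro _ (⟨s, -, rfl⟩ | ⟨r, hr, rfl⟩)
    · exact mem_fibreProduct.2 (by simp)
    · exact one_mk_mem_fibreProduct.2 (Subgroup.subset_normalClosure hr)
  · intro p hp
    have hmem := mul_mem (hdiag p.1) (hle (mem_fibreProduct.1 hp) : (1, p.1⁻¹ * p.2) ∈ K)
    rwa [MonoidHom.inr_apply, Prod.mk_mul_mk, mul_one, mul_inv_cancel_left] at hmem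

theorem mem_of_conj_mem_map_fibreProduct {N : Subgroup F} [N.Normal] {β : F × F →* G}
    (hβ : Function.Injective β) {X : G} {m : ℕ} (hm : m ≠ 0) (hXm : X ^ m ∈ β.range)
    (hX : ∀ g ∈ (fibreProduct N).map β, conj X g ∈ (fibreProduct N).map β) {w : F}
    (hw : conj X (β (1, w)) ∈ (fibreProduct N).map β) : w ∈ N := by
  obtain ⟨p, hp⟩ := hXm
  have hpow (k : ℕ) : conj (X ^ (k + 1)) (β (1, w)) ∈ (fibreProduct N).map β := by
    induction k with
    | zero => rwa [zero_add, pow_one]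
    | succ k ih => rw [pow_succ', map_mul]; exact hX _ ih
  obtain ⟨k, rfl⟩ := Nat.exists_eq_succ_of_ne_zero hm
  obtain ⟨q, hq, hqw⟩ := hpow k
  rw [← hp, MulAut.conj_apply, ← map_inv, ← map_mul, ← map_mul] at hqw
  obtain rfl := hβ hqw
  have hN : N.Normal := inferInstance
  simpa using hN.mem_comm_iff.1 (show p.2 * w * p.2⁻¹ ∈ N by simpa [mem_fibreProduct] using hq)

end FibreProduct

/-! ### The fibre product in `GL(4, ℤ)` -/

/-- Invertible `4 × 4` matrices as block matrices. -/
def glFinSumEquiv : GL (Fin 2 ⊕ Fin 2) ℤ ≃* GL (Fin 4) ℤ :=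
  Units.mapEquiv (reindexAlgEquiv ℤ ℤ finSumFinEquiv).toMulEquiv

/-- The embedding of a product of two free groups into `GL(4, ℤ)` by Sanov's matrices in the two
diagonal blocks. -/
def prodHom : FreeGroup Bool × FreeGroup Bool →* GL (Fin 4) ℤ :=
  glFinSumEquiv.toMonoidHom.comp (blockDiagHom.comp
    ((SpecialLinearGroup.toGL.comp sanovHom).prodMap (SpecialLinearGroup.toGL.comp sanovHom)))

theorem prodHom_mk (u v : FreeGroup Bool) : prodHom (u, v) = glFinSumEquiv (blockDiagHom
    (SpecialLinearGroup.toGL (sanovHom u), SpecialLinearGroup.toGL (sanovHom v))) := rfl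

theorem injective_prodHom : Function.Injective prodHom := by
  have hsanov : Function.Injective (SpecialLinearGroup.toGL.comp sanovHom) :=
    SpecialLinearGroup.toGL_injective.comp injective_sanovHom
  exact glFinSumEquiv.injective.comp (injective_blockDiagHom.comp (hsanov.prodMap hsanov))

theorem exists_pow_mem_range_prodHom {X : GL (Fin 4) ℤ} {r : FreeGroup Bool}
    (hr : ((sanovHom r).1 - 1).det ≠ 0) (hX : conj X (prodHom (1, r)) ∈ prodHom.range) :
    ∃ m ≠ 0, X ^ m ∈ prodHom.range := by
  obtain ⟨X, rfl⟩ := glFinSumEquiv.surjective X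
  obtain ⟨⟨u, v⟩, huv⟩ := hX
  have hconj : conj X (blockDiagHom (1, SpecialLinearGroup.toGL (sanovHom r))) = blockDiagHom
      (SpecialLinearGroup.toGL (sanovHom u), SpecialLinearGroup.toGL (sanovHom v)) := by
    rw [prodHom_mk, prodHom_mk, map_one, map_one, MulAut.conj_apply, ← map_inv, ← map_mul,
      ← map_mul] at huv
    exact (glFinSumEquiv.injective huv).symm
  obtain ⟨⟨A, D⟩, hAD⟩ := sq_mem_range_blockDiagHom hconj hr (sanovHom u).2 (sanovHom v).2
  obtain ⟨m, hm, hpow⟩ := exists_pow_mem_range_sanovHom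
  obtain ⟨α, hα⟩ := hpow A
  obtain ⟨δ, hδ⟩ := hpow D
  refine ⟨2 * m, mul_ne_zero two_ne_zero hm, (α, δ), ?_⟩
  rw [MonoidHom.comp_apply] at hα hδ
  rw [prodHom_mk, hα, hδ, ← Prod.pow_mk, map_pow, hAD, ← pow_mul, map_pow]

theorem det_sanovHom_wordRelators_sub_one_ne_zero (Z : List Bool) :
    ((sanovHom (wordRelators Z 0)).1 - 1).det ≠ 0 := by
  have htrue : (sanovHom (.of true)).1 = !![1, 2; 0, 1] := by
    simpa [sanovHom] using coe_sanovGen_true_zpow 1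
  have hfalse : (sanovHom (.of false)).1 = !![1, 0; 2, 1] := by
    simpa [sanovHom] using coe_sanovGen_false_zpow 1
  have hcode : (sanovHom (codeWord 3)).1 = !![607105, 329376; 1327104, 720001] := by
    simp [codeWord, div_eq_mul_inv, htrue, hfalse, pow_succ]
  have hr : wordRelators Z 0 = codeWord 3 * codeWord 3 := rfl
  simp [hr, hcode, one_fin_two]


section MihailovaTuple

variable {r : Fin 12 → FreeGroup Bool} {w : FreeGroup Bool}

/-- Mihailova's generators of the fibre product of the two-generator group with relators `r`. -/
def fibreGen (r : Fin 12 → FreeGroup Bool) : Fin 14 → FreeGroup Bool × FreeGroup Bool :=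
  Fin.append (fun i : Fin 2 => (.of (finTwoEquiv i), .of (finTwoEquiv i))) fun j => (1, r j)

theorem range_lift_fibreGen : (FreeGroup.lift (fibreGen r)).range =
    fibreProduct (Subgroup.normalClosure (Set.range r)) := by
  have hrange : Set.range (fibreGen r) = (fun s => (s, s)) '' Set.range FreeGroup.of ∪
      (fun s => (1, s)) '' Set.range r := by
    rw [← Set.range_comp, ← Set.range_comp, ← finTwoEquiv.surjective.range_comp,
      ← Set.Sum.elim_range, ← Fin.append_comp_sumElim]
    exact (Function.Surjective.range_comp (finSumFinEquiv (m := 2) (n := 12)).surjective _).symm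
  rw [FreeGroup.range_lift_eq_closure, hrange,
    closure_eq_fibreProduct (FreeGroup.closure_range_of _)]

/-- The matrices of Mihailova's generators, followed by the matrix of a test element `(1, w)`. -/
def mihailovaTuple (r : Fin 12 → FreeGroup Bool) (w : FreeGroup Bool) : Fin 15 → GL (Fin 4) ℤ :=
  Fin.snoc (fun i => prodHom (fibreGen r i)) (prodHom (1, w))

theorem mihailovaTuple_castSucc (i : Fin 14) :
    mihailovaTuple r w i.castSucc = prodHom (fibreGen r i) := Fin.snoc_castSucc ..

theorem mihailovaTuple_last : mihailovaTuple r w (Fin.last 14) = prodHom (1, w) := Fin.snoc_last ..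

theorem range_lift_prodHom_fibreGen : (FreeGroup.lift fun i => prodHom (fibreGen r i)).range =
    (fibreProduct (Subgroup.normalClosure (Set.range r))).map prodHom := by
  rw [← range_lift_fibreGen, ← MonoidHom.range_comp]
  congr 1
  ext1 i
  simp

theorem range_lift_mihailovaTuple : (FreeGroup.lift (mihailovaTuple r w)).range =
    (fibreProduct (Subgroup.normalClosure (Set.range r))).map prodHom ⊔
      Subgroup.zpowers (prodHom (1, w)) := by
  rw [← range_lift_prodHom_fibreGen, FreeGroup.range_lift_eq_closure,
    FreeGroup.range_lift_eq_closure, mihailovaTuple, Fin.range_snoc, Set.insert_eq, Set.union_comm,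
    Subgroup.closure_union, Subgroup.zpowers_eq_closure]

theorem mem_of_mulEquiv (hr : ((sanovHom (r 0)).1 - 1).det ≠ 0)
    (Ψ : (Multiplicative (Fin 4 → ℤ) ⋊[phiOf (mihailovaTuple r w)] FreeGroup (Fin 15)) ≃*
      (Multiplicative (Fin 4 → ℤ) ⋊[phiOf (mihailovaTuple r 1)] FreeGroup (Fin 15))) :
    w ∈ Subgroup.normalClosure (Set.range r) := by
  obtain ⟨X, hX⟩ := exists_conj_mem_range_lift Ψ
  have htriv : Subgroup.zpowers (prodHom (1, 1)) = ⊥ := by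
    rw [← Prod.one_eq_mk, map_one, Subgroup.zpowers_one_eq_bot]
  rw [range_lift_mihailovaTuple, range_lift_mihailovaTuple, htriv, sup_bot_eq] at hX
  set N := Subgroup.normalClosure (Set.range r)
  have hX' (g) (hg : g ∈ (fibreProduct N).map prodHom) := hX g (Subgroup.mem_sup_left hg)
  have hr₀ : r 0 ∈ N := Subgroup.subset_normalClosure ⟨0, rfl⟩
  obtain ⟨m, hm, hXm⟩ := exists_pow_mem_range_prodHom hr (Subgroup.map_le_range _ _
    (hX' _ ⟨(1, r 0), one_mk_mem_fibreProduct.2 hr₀, rfl⟩))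
  exact mem_of_conj_mem_map_fibreProduct injective_prodHom hm hXm hX'
    (hX _ (Subgroup.mem_sup_right (Subgroup.mem_zpowers _)))

theorem nonempty_mulEquiv_iff (hr : ((sanovHom (r 0)).1 - 1).det ≠ 0) :
    Nonempty ((Multiplicative (Fin 4 → ℤ) ⋊[phiOf (mihailovaTuple r 1)] FreeGroup (Fin 15)) ≃*
      (Multiplicative (Fin 4 → ℤ) ⋊[phiOf (mihailovaTuple r w)] FreeGroup (Fin 15))) ↔
    w ∈ Subgroup.normalClosure (Set.range r) := by
  refine ⟨fun ⟨Ψ⟩ => mem_of_mulEquiv hr Ψ.symm, fun hw => ?_⟩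
  refine nonempty_semidirectProduct_phiOf_mulEquiv (fun i => ?_) ?_ ?_
  · rw [mihailovaTuple_castSucc, mihailovaTuple_castSucc]
  · rw [mihailovaTuple_last]
    exact map_one prodHom
  · simp only [mihailovaTuple_castSucc, mihailovaTuple_last, range_lift_prodHom_fibreGen]
    exact ⟨(1, w), one_mk_mem_fibreProduct.2 hw, rfl⟩

end MihailovaTuple

end BlockMatrices

/-! ### Computability of the reduction -/

section Computability

open GLPrimcodable
open scoped commutatorElement MatrixGroups

theorem primrec_val : Primrec fun g : GL (Fin 4) ℤ => g.1 := by
  let := Primcodable.subtype primrecPred_isUnitPair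
  have h : Primrec (unitsEquivProdSubtype (Matrix (Fin 4) (Fin 4) ℤ)) := Primrec.of_equiv
  exact Primrec.fst.comp ((Primrec.subtype_val (hp := primrecPred_isUnitPair)).comp h)

theorem primrec_inv_val : Primrec fun g : GL (Fin 4) ℤ => g⁻¹.1 := by
  let := Primcodable.subtype primrecPred_isUnitPair
  have h : Primrec (unitsEquivProdSubtype (Matrix (Fin 4) (Fin 4) ℤ)) := Primrec.of_equiv
  exact Primrec.snd.comp ((Primrec.subtype_val (hp := primrecPred_isUnitPair)).comp h)

section

variable {α : Type*} [Primcodable α] {f g : α → GL (Fin 4) ℤ}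

theorem primrec_of_val (hval : Primrec fun a => (f a).1) (hinv : Primrec fun a => (f a)⁻¹.1) :
    Primrec f := by
  let := Primcodable.subtype primrecPred_isUnitPair
  refine (Primrec.of_equiv_iff (unitsEquivProdSubtype (Matrix (Fin 4) (Fin 4) ℤ))).1 ?_
  exact (Primrec.subtype_val_iff (hp := primrecPred_isUnitPair)).1 (hval.pair hinv)

theorem primrec_mul (hf : Primrec f) (hg : Primrec g) : Primrec fun a => f a * g a := by
  refine primrec_of_val
    (primrec_matMul.comp ((primrec_val.comp hf).pair (primrec_val.comp hg))) ?_
  simpa only [mul_inv_rev, Units.val_mul] using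
    primrec_matMul.comp ((primrec_inv_val.comp hg).pair (primrec_inv_val.comp hf))

theorem primrec_inv (hf : Primrec f) : Primrec fun a => (f a)⁻¹ :=
  primrec_of_val (primrec_inv_val.comp hf) (by simpa only [inv_inv] using primrec_val.comp hf)

theorem primrec_conj (hf : Primrec f) (hg : Primrec g) :
    Primrec fun a => MulAut.conj (f a) (g a) :=
  primrec_mul (primrec_mul hf hg) (primrec_inv hf)

theorem primrec_commutatorElement (hf : Primrec f) (hg : Primrec g) :
    Primrec fun a => ⁅f a, g a⁆ :=
  primrec_mul (primrec_conj hf hg) (primrec_inv hg)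

end

theorem primrec_pow (g : GL (Fin 4) ℤ) : Primrec fun n : ℕ => g ^ n := by
  have h : Primrec₂ fun (_ : ℕ) (y : GL (Fin 4) ℤ) => y * g :=
    primrec_mul Primrec.snd (Primrec.const g)
  refine (Primrec.nat_rec₁ (1 : GL (Fin 4) ℤ) h).of_eq fun n => ?_
  induction n with
  | zero => rfl
  | succ n ih => rw [pow_succ, ← ih]

theorem primrec_zpow (g : GL (Fin 4) ℤ) : Primrec fun n : ℤ => g ^ n := by
  refine (primrec_mul ((primrec_pow g).comp primrec_toNat)
    ((primrec_pow g⁻¹).comp primrec_negToNat)).of_eq fun n => ?_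
  obtain ⟨m, rfl | rfl⟩ := n.eq_nat_or_neg <;> simp

theorem Letters.primrec_config (L : Letters (GL (Fin 4) ℤ)) (ph : Phase) (g : ℤ) :
    Primrec fun a : ℤ => L.config ⟨ph, a, g⟩ :=
  primrec_conj (primrec_mul (primrec_zpow L.x) (Primrec.const (L.y ^ g)))
    (Primrec.const (L.tau ph))

theorem primrec_map_configWord (f : FreeGroup Bool →* GL (Fin 4) ℤ) (ph : Phase) (g : ℤ) :
    Primrec fun a : ℤ => f (configWord ⟨ph, a, g⟩) := by
  simp only [configWord, map_commutatorElement, ← Letters.map_config]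
  exact primrec_commutatorElement (Primrec.const _) (Letters.primrec_config _ ph g)

theorem primrec_mihailovaTuple {α : Type*} [Primcodable α] (r : Fin 12 → FreeGroup Bool)
    {w : α → FreeGroup Bool} (hw : Primrec fun a => prodHom (1, w a)) :
    Primrec fun a => mihailovaTuple r (w a) := by
  have h (i : Fin 15) : Primrec fun a => mihailovaTuple r (w a) i := by
    cases i using Fin.lastCases with
    | cast i => simpa only [mihailovaTuple_castSucc] using Primrec.const _
    | last => simpa only [mihailovaTuple_last] using hw
  exact Primrec.fin_curry.2 (Primrec.fin_curry₁.2 h).swap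

end Computability

end IsoProblem

open IsoProblem GLPrimcodable in
theorem isomorphism_problem_Z4_by_F15_undecidable_general :
    ∃ f : Fin 15 → Matrix.GeneralLinearGroup (Fin 4) ℤ,
      ¬ ComputablePred (fun g : Fin 15 → Matrix.GeneralLinearGroup (Fin 4) ℤ =>
        Nonempty ((Multiplicative (Fin 4 → ℤ) ⋊[phiOf f] FreeGroup (Fin 15)) ≃*
          (Multiplicative (Fin 4 → ℤ) ⋊[phiOf g] FreeGroup (Fin 15)))) := by
  obtain ⟨Z, hZ, hGood⟩ := exists_program_not_computablePred
  refine ⟨mihailovaTuple (wordRelators Z) 1, fun hIso => hGood ?_⟩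
  have htuple : Primrec fun a : ℤ =>
      mihailovaTuple (wordRelators Z) (configWord ⟨.exec, a, -1⟩) :=
    primrec_mihailovaTuple _
      (primrec_map_configWord (prodHom.comp (.inr _ _)) .exec (-1))
  refine .computable_of_manyOneReducible ⟨_, htuple.to_comp, fun a => ?_⟩ hIso
  rw [nonempty_mulEquiv_iff (det_sanovHom_wordRelators_sub_one_ne_zero Z),
    configWord_mem_iff hZ]

open GLPrimcodable in
/-- There is no algorithm deciding, given two `15`-tuples of elements of `GL(4,ℤ)`, whether
the corresponding semidirect products `ℤ⁴ ⋊ F₁₅` are isomorphic. -/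
theorem isomorphism_problem_Z4_by_F15_undecidable :
    ¬ ComputablePred (fun p : (Fin 15 → Matrix.GeneralLinearGroup (Fin 4) ℤ) ×
        (Fin 15 → Matrix.GeneralLinearGroup (Fin 4) ℤ) =>
      Nonempty ((Multiplicative (Fin 4 → ℤ) ⋊[phiOf p.1] FreeGroup (Fin 15)) ≃*
        (Multiplicative (Fin 4 → ℤ) ⋊[phiOf p.2] FreeGroup (Fin 15)))) := by
  obtain ⟨f, hf⟩ := isomorphism_problem_Z4_by_F15_undecidable_general
  exact fun h => hf <| .computable_of_manyOneReducible
    ⟨fun g => (f, g), (Computable.const f).pair Computable.id, fun _ => Iff.rfl⟩ h
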